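/- arXiv:1806.04783 — 9 statements merged into one kernel-verified Lean document; each statement's English description precedes it below -/
import Mathlib

section
/- There is an absolute constant C > 0 such that for every prime p ≥ 3, every basis {ω₁, ω₂, ω₃} of F_{p³} over F_p, and all integers 1 ≤ H₁ ≤ H₂ ≤ H₃ < √(p/2), one has S₁ := Σ_{z ∈ Z \ F_p} f₀(z)² ≤ C·(H₁H₂H₃)²·log p, where F_p denotes the prime subfield of F_{p³}. -/
open scoped Classical

/-- Integer coordinate vectors of pairs `(x, y)`. -/
abbrev V6 : Type := (Fin 3 → ℤ) × (Fin 3 → ℤ)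

/-- Evaluate a coordinate vector. -/
def ev {F : Type} [Field F] (η : Fin 3 → F) (x : Fin 3 → ℤ) : F := ∑ i, (x i : F) * η i

/-- Integer box with real radii. -/
noncomputable def bx (r : Fin 3 → ℝ) : Finset (Fin 3 → ℤ) :=
  Fintype.piFinset (fun i => Finset.Icc (-⌊r i⌋) ⌊r i⌋)

/-- Points of the lattice attached to `z` in a box. -/
noncomputable def LA {F : Type} [Field F] (η : Fin 3 → F) (z : F) (r : Fin 3 → ℝ) : Finset V6 :=
  (bx r ×ˢ bx r).filter (fun a => ev η a.1 * z = ev η a.2)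

/-- Independence modulo `p`. -/
def Ind {F : Type} [Field F] (p : ℕ) (η : Fin 3 → F) : Prop :=
  ∀ c : Fin 3 → ℤ, ev η c = 0 → ∀ i, (p : ℤ) ∣ c i

lemma ev_add {F : Type} [Field F] (η : Fin 3 → F) (x y : Fin 3 → ℤ) :
    ev η (x + y) = ev η x + ev η y := by
  simp [ev, add_mul, Finset.sum_add_distrib]

lemma ev_smul {F : Type} [Field F] (η : Fin 3 → F) (n : ℤ) (x : Fin 3 → ℤ) :
    ev η (n • x) = (n : F) * ev η x := by
  simp [ev, Finset.mul_sum, mul_assoc]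

lemma ev_zero {F : Type} [Field F] (η : Fin 3 → F) : ev η 0 = 0 := by simp [ev]

lemma ev_neg {F : Type} [Field F] (η : Fin 3 → F) (x : Fin 3 → ℤ) :
    ev η (-x) = - ev η x := by
  simp [ev]

lemma ev_sub {F : Type} [Field F] (η : Fin 3 → F) (x y : Fin 3 → ℤ) :
    ev η (x - y) = ev η x - ev η y := by
  rw [sub_eq_add_neg, ev_add, ev_neg, sub_eq_add_neg]

lemma mem_bx (r : Fin 3 → ℝ) (x : Fin 3 → ℤ) : x ∈ bx r ↔ ∀ i, |(x i : ℝ)| ≤ r i := by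
  simp only [bx, Fintype.mem_piFinset, Finset.mem_Icc]
  refine forall_congr' fun i => ?_
  rw [abs_le, neg_le, Int.le_floor, Int.le_floor]
  push_cast
  constructor
  · rintro ⟨a, b⟩; constructor <;> linarith
  · rintro ⟨a, b⟩; constructor <;> linarith

lemma mem_LA {F : Type} [Field F] (η : Fin 3 → F) (z : F) (r : Fin 3 → ℝ) (a : V6) :
    a ∈ LA η z r ↔ ((∀ i, |(a.1 i : ℝ)| ≤ r i) ∧ (∀ i, |(a.2 i : ℝ)| ≤ r i)) ∧
      ev η a.1 * z = ev η a.2 := by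
  simp only [LA, Finset.mem_filter, Finset.mem_product, mem_bx]

lemma span_rel {F : Type} [Field F] (η : Fin 3 → F) (z : F) (r : Fin 3 → ℝ) (a : V6)
    (h : a ∈ Submodule.span ℤ (LA η z r : Set V6)) : ev η a.1 * z = ev η a.2 := by
  induction h using Submodule.span_induction with
  | mem x hx => exact ((mem_LA _ _ _ _).1 hx).2
  | zero => simp [ev_zero]
  | add x y _ _ hx hy => simp [ev_add, add_mul, hx, hy]
  | smul n x _ hx => simp [ev_smul, mul_assoc, hx, -zsmul_eq_mul]

lemma modk {F : Type} [Field F] (η : Fin 3 → F) (z : F) (r : Fin 3 → ℝ) (s k : ℕ) (hk : 0 < k)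
    (hr : Module.finrank ℤ (Submodule.span ℤ (LA η z r : Set V6)) ≤ s) :
    (LA η z r).card ≤ k ^ s * (LA η z (fun i => 2 * r i / k)).card := by
  set Λ := Submodule.span ℤ (LA η z r : Set V6) with hΛ
  have : NeZero k := ⟨hk.ne'⟩
  let b := Module.finBasis ℤ Λ
  let φ : V6 → (Fin (Module.finrank ℤ Λ) → ZMod k) := fun a =>
    if h : a ∈ Λ then fun i => ((b.repr ⟨a, h⟩ i : ℤ) : ZMod k) else 0
  have h1 := Finset.card_le_mul_card_image (f := φ) (LA η z r)
    (LA η z (fun i => 2 * r i / k)).card ?_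
  · refine h1.trans ?_
    rw [mul_comm]
    refine Nat.mul_le_mul_right _ ?_
    refine (Finset.card_le_univ _).trans ?_
    rw [Fintype.card_fun, ZMod.card, Fintype.card_fin]
    exact Nat.pow_le_pow_right hk hr
  · intro y hy
    obtain ⟨a0, ha0, rfl⟩ := Finset.mem_image.1 hy
    have hsub : (LA η z r).filter (fun a => φ a = φ a0) ⊆
        (LA η z (fun i => 2 * r i / k)).image (fun c => a0 + (k : ℤ) • c) := by
      intro a ha
      obtain ⟨ha, hφ⟩ := Finset.mem_filter.1 ha
      have hm : a ∈ Λ := Submodule.subset_span ha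
      have hm0 : a0 ∈ Λ := Submodule.subset_span ha0
      have hd : ∀ i, ∃ d : ℤ, b.repr ⟨a, hm⟩ i - b.repr ⟨a0, hm0⟩ i = (k : ℤ) * d := by
        intro i
        have := congrFun hφ i
        simp only [φ, hm, hm0, dif_pos] at this
        have := (ZMod.intCast_eq_intCast_iff_dvd_sub _ _ _).1 this.symm
        exact this
      choose d hd using hd
      let c : Λ := ∑ i, d i • b i
      have hc : (⟨a, hm⟩ : Λ) = ⟨a0, hm0⟩ + (k : ℤ) • c := by
        apply b.repr.injective
        ext i
        rw [map_add, map_smul]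
        have : b.repr c i = d i := by
          simp only [c]
          rw [b.repr_sum_self]
        simp only [Finsupp.add_apply, Finsupp.smul_apply, this, smul_eq_mul]
        linarith [hd i]
      have hc' : a = a0 + (k : ℤ) • (c : V6) := by
        have := congrArg Subtype.val hc
        simpa using this
      refine Finset.mem_image.2 ⟨c, ?_, hc'.symm⟩
      have A := (mem_LA _ _ _ _).1 ha
      have A0 := (mem_LA _ _ _ _).1 ha0
      have hkr : (0 : ℝ) < k := by exact_mod_cast hk
      refine (mem_LA _ _ _ _).2 ⟨⟨fun i => ?_, fun i => ?_⟩, span_rel η z r _ c.2⟩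
      · have e : (a.1 i : ℝ) = a0.1 i + k * (c : V6).1 i := by
          have := congrFun (congrArg Prod.fst hc') i
          simp only [Prod.fst_add, Pi.add_apply, Prod.smul_fst, Pi.smul_apply, smul_eq_mul] at this
          exact_mod_cast this
        have h1 := abs_le.1 (A.1.1 i)
        have h2 := abs_le.1 (A0.1.1 i)
        rw [le_div_iff₀ hkr, ← abs_of_pos hkr, ← abs_mul, abs_le]
        constructor <;> nlinarith
      · have e : (a.2 i : ℝ) = a0.2 i + k * (c : V6).2 i := by
          have := congrFun (congrArg Prod.snd hc') i
          simp only [Prod.snd_add, Pi.add_apply, Prod.smul_snd, Pi.smul_apply, smul_eq_mul] at this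
          exact_mod_cast this
        have h1 := abs_le.1 (A.1.2 i)
        have h2 := abs_le.1 (A0.1.2 i)
        rw [le_div_iff₀ hkr, ← abs_of_pos hkr, ← abs_mul, abs_le]
        constructor <;> nlinarith
    exact (Finset.card_le_card hsub).trans Finset.card_image_le

/-- `F` has degree 3, hence no quadratic subfield. -/
lemma hquad {F : Type} [Field F] [Fintype F] {p : ℕ} [Fact p.Prime] [Algebra (ZMod p) F]
    (h3 : Module.finrank (ZMod p) F = 3) (z : F) (hz : ¬ ∃ t : ℤ, z = (t : F))
    (D α δ μ : ℤ) (h : ((D : F) * z - α) * ((D : F) * z - δ) = μ) : (D : F) = 0 := by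
  by_contra hD
  have hint : IsIntegral (ZMod p) z := Algebra.IsIntegral.isIntegral z
  have hD' : (D : ZMod p) ≠ 0 := by
    intro h0
    apply hD
    rw [← map_intCast (algebraMap (ZMod p) F), h0, map_zero]
  let P : Polynomial (ZMod p) :=
    Polynomial.C ((D : ZMod p) ^ 2) * Polynomial.X ^ 2 +
      Polynomial.C (-((D : ZMod p) * (α + δ))) * Polynomial.X +
      Polynomial.C ((α : ZMod p) * δ - μ)
  have hdeg : P.natDegree = 2 := Polynomial.natDegree_quadratic (pow_ne_zero 2 hD')
  have hP0 : P ≠ 0 := by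
    intro h0; rw [h0] at hdeg; simp at hdeg
  have haev : Polynomial.aeval z P = 0 := by
    simp only [P, map_add, map_mul, Polynomial.aeval_X, map_pow, map_neg,
      map_sub, map_intCast]
    linear_combination h
  have hle : (minpoly (ZMod p) z).natDegree ≤ 2 := by
    rw [← hdeg]
    exact Polynomial.natDegree_le_of_dvd (minpoly.dvd _ _ haev) hP0
  have hdvd := minpoly.degree_dvd hint
  rw [h3] at hdvd
  have h1 : (minpoly (ZMod p) z).natDegree = 1 := by
    rcases (Nat.dvd_prime Nat.prime_three).1 hdvd with h | h
    · exact h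
    · omega
  obtain ⟨t, ht⟩ := minpoly.natDegree_eq_one_iff.1 h1
  apply hz
  refine ⟨(t.val : ℤ), ?_⟩
  rw [← ht, ← map_intCast (algebraMap (ZMod p) F)]
  simp

lemma zero_of_dvd_abs {p : ℕ} {n : ℤ} (h : (p : ℤ) ∣ n) (hn : |(n : ℝ)| < p) : n = 0 := by
  apply Int.eq_zero_of_abs_lt_dvd h
  exact_mod_cast hn

lemma sum_mab {M : Type} [AddCommMonoid M] {m a b : Fin 3} (hc : ∀ i, i = m ∨ i = a ∨ i = b)
    (h1 : m ≠ a) (h2 : m ≠ b) (h3 : a ≠ b) (g : Fin 3 → M) : ∑ i, g i = g m + (g a + g b) := by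
  have : (Finset.univ : Finset (Fin 3)) = {m, a, b} := by
    ext i; simpa using hc i
  rw [this, Finset.sum_insert (by simp [h1, h2]), Finset.sum_pair h3]

lemma prod_mab {M : Type} [CommMonoid M] {m a b : Fin 3} (hc : ∀ i, i = m ∨ i = a ∨ i = b)
    (h1 : m ≠ a) (h2 : m ≠ b) (h3 : a ≠ b) (g : Fin 3 → M) : ∏ i, g i = g m * (g a * g b) := by
  have : (Finset.univ : Finset (Fin 3)) = {m, a, b} := by
    ext i; simpa using hc i
  rw [this, Finset.prod_insert (by simp [h1, h2]), Finset.prod_pair h3]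

lemma int_zero_of_lt_one {n : ℤ} {r : ℝ} (h : |(n : ℝ)| ≤ r) (hr : r < 1) : n = 0 := by
  have : |(n : ℝ)| < 1 := lt_of_le_of_lt h hr
  have h2 : |n| < 1 := by exact_mod_cast this
  exact Int.abs_lt_one_iff.1 h2

lemma abs_det_le {x y z w : ℤ} {r : ℝ} (h1 : |(x : ℝ)| ≤ r) (h2 : |(y : ℝ)| ≤ r)
    (h3 : |(z : ℝ)| ≤ r) (h4 : |(w : ℝ)| ≤ r) : |((x * y - z * w : ℤ) : ℝ)| ≤ 2 * r ^ 2 := by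
  push_cast
  have hr : 0 ≤ r := (abs_nonneg _).trans h1
  calc |(x : ℝ) * y - z * w| ≤ |(x : ℝ) * y| + |(z : ℝ) * w| := abs_sub _ _
    _ = |(x : ℝ)| * |(y : ℝ)| + |(z : ℝ)| * |(w : ℝ)| := by rw [abs_mul, abs_mul]
    _ ≤ r * r + r * r := by gcongr
    _ = 2 * r ^ 2 := by ring

lemma rank1 {F : Type} [Field F] [Fintype F] {p : ℕ} [Fact p.Prime] [Algebra (ZMod p) F]
    (h3 : Module.finrank (ZMod p) F = 3) (η : Fin 3 → F) (hη : Ind p η)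
    {m a b : Fin 3} (hc : ∀ i, i = m ∨ i = a ∨ i = b) (hma : m ≠ a) (hmb : m ≠ b) (hab : a ≠ b)
    (z : F) (hz : ¬ ∃ t : ℤ, z = (t : F)) (r : Fin 3 → ℝ) (hm : r m < 1) (hb : ∀ i, r i ≤ r b)
    (hp : 2 * r b ^ 2 < p) (hrp : r b < p) :
    Module.finrank ℤ (Submodule.span ℤ (LA η z r : Set V6)) ≤ 1 := by
  have : CharP F p := by
    have := charP_of_injective_algebraMap (algebraMap (ZMod p) F).injective p
    exact this
  have hev : ∀ x : Fin 3 → ℤ, x m = 0 → ev η x = x a * η a + x b * η b := by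
    intro x hx
    rw [ev, sum_mab hc hma hmb hab]; simp [hx]
  have hηz : ∀ i, η i ≠ 0 := by
    intro i h0
    have := hη (Pi.single i 1) (by
      rw [ev, Finset.sum_eq_single i]
      · simp [h0]
      · intro j _ hj; simp [hj]
      · simp) i
    simp at this
    have h2 := (Fact.out : p.Prime).two_le
    have := Int.le_of_dvd one_pos this
    omega
  have hzero : ∀ u ∈ LA η z r, u.1 m = 0 ∧ u.2 m = 0 := by
    intro u hu
    have := (mem_LA _ _ _ _).1 hu
    exact ⟨int_zero_of_lt_one (this.1.1 m) hm, int_zero_of_lt_one (this.1.2 m) hm⟩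
  have hdet : ∀ u ∈ LA η z r, ∀ v ∈ LA η z r, u.1 a * v.1 b - u.1 b * v.1 a = 0 := by
    intro u hu v hv
    have U := (mem_LA _ _ _ _).1 hu
    have W := (mem_LA _ _ _ _).1 hv
    have eu := U.2
    have evv := W.2
    rw [hev _ (hzero u hu).1, hev _ (hzero u hu).2] at eu
    rw [hev _ (hzero v hv).1, hev _ (hzero v hv).2] at evv
    set D : ℤ := u.1 a * v.1 b - u.1 b * v.1 a with hD
    have hDF : (D : F) = u.1 a * v.1 b - u.1 b * v.1 a := by rw [hD]; push_cast; ring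
    have e1 : ((D : F) * z - ((v.1 b * u.2 a - u.1 b * v.2 a : ℤ) : F)) * η a
        = ((v.1 b * u.2 b - u.1 b * v.2 b : ℤ) : F) * η b := by
      rw [hDF]; push_cast
      linear_combination (v.1 b : F) * eu - (u.1 b : F) * evv
    have e2 : ((D : F) * z - ((u.1 a * v.2 b - v.1 a * u.2 b : ℤ) : F)) * η b
        = ((u.1 a * v.2 a - v.1 a * u.2 a : ℤ) : F) * η a := by
      rw [hDF]; push_cast
      linear_combination (u.1 a : F) * evv - (v.1 a : F) * eu
    have e3 := hquad h3 z hz D (v.1 b * u.2 a - u.1 b * v.2 a) (u.1 a * v.2 b - v.1 a * u.2 b)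
      ((v.1 b * u.2 b - u.1 b * v.2 b) * (u.1 a * v.2 a - v.1 a * u.2 a)) (by
        apply mul_right_cancel₀ (mul_ne_zero (hηz a) (hηz b))
        rw [Int.cast_mul]
        linear_combination (((D : F) * z - ((u.1 a * v.2 b - v.1 a * u.2 b : ℤ) : F)) * η b) * e1 +
          (((v.1 b * u.2 b - u.1 b * v.2 b : ℤ) : F) * η b) * e2)
    apply zero_of_dvd_abs ((CharP.intCast_eq_zero_iff F p D).1 e3)
    refine lt_of_le_of_lt (abs_det_le (r := r b) ?_ ?_ ?_ ?_) hp
    · exact (U.1.1 _).trans (hb _)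
    · exact (W.1.1 _).trans (hb _)
    · exact (U.1.1 _).trans (hb _)
    · exact (W.1.1 _).trans (hb _)
  have hall : ∀ u ∈ LA η z r, ∀ v ∈ LA η z r, ∀ i j, u.1 i * v.1 j - u.1 j * v.1 i = 0 := by
    intro u hu v hv i j
    have d1 := hdet u hu v hv
    have z1 := (hzero u hu).1
    have z2 := (hzero v hv).1
    rcases hc i with rfl | rfl | rfl <;> rcases hc j with rfl | rfl | rfl <;>
      first | linarith | (simp only [z1, z2]; linarith)
  by_cases hex : ∃ u ∈ LA η z r, ∃ j, u.1 j ≠ 0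
  · obtain ⟨u, hu, j, hj⟩ := hex
    have U := (mem_LA _ _ _ _).1 hu
    have key : ∀ v ∈ LA η z r, u.1 j • v = v.1 j • u := by
      intro v hv
      have W := (mem_LA _ _ _ _).1 hv
      have hx : u.1 j • v.1 - v.1 j • u.1 = 0 := by
        ext i
        simp only [Pi.sub_apply, Pi.smul_apply, smul_eq_mul, Pi.zero_apply]
        linarith [hall u hu v hv j i]
      have hy0 : ev η (u.1 j • v.2 - v.1 j • u.2) = 0 := by
        have := congrArg (ev η) hx
        rw [ev_sub, ev_smul, ev_smul, ev_zero] at this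
        rw [ev_sub, ev_smul, ev_smul, ← U.2, ← W.2]
        linear_combination z * this
      have hy : u.1 j • v.2 - v.1 j • u.2 = 0 := by
        ext i
        apply zero_of_dvd_abs (hη _ hy0 i)
        refine lt_of_le_of_lt ?_ hp
        simp only [Pi.sub_apply, Pi.smul_apply, smul_eq_mul]
        exact abs_det_le ((U.1.1 _).trans (hb _)) ((W.1.2 _).trans (hb _))
          ((W.1.1 _).trans (hb _)) ((U.1.2 _).trans (hb _))
      exact Prod.ext (sub_eq_zero.1 hx) (sub_eq_zero.1 hy)
    have key2 : ∀ v ∈ Submodule.span ℤ (LA η z r : Set V6), u.1 j • v = v.1 j • u := by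
      intro v hv
      induction hv using Submodule.span_induction with
      | mem x hx => exact key x hx
      | zero => simp
      | add x y _ _ hx hy =>
        rw [smul_add, hx, hy, Prod.fst_add, Pi.add_apply, add_smul]
      | smul n x _ hx =>
        rw [smul_comm, hx, Prod.smul_fst, Pi.smul_apply, smul_eq_mul, mul_smul]
    let f : Submodule.span ℤ (LA η z r : Set V6) →ₗ[ℤ] ℤ :=
      ((LinearMap.proj j).comp (LinearMap.fst ℤ (Fin 3 → ℤ) (Fin 3 → ℤ))).comp
        (Submodule.subtype _)
    have hf : Function.Injective f := by
      rw [injective_iff_map_eq_zero]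
      intro v hv
      have h1 : (v : V6).1 j = 0 := hv
      have h2 := key2 v v.2
      rw [h1, zero_smul] at h2
      rcases smul_eq_zero.1 h2 with h | h
      · exact absurd h hj
      · exact Subtype.ext h
    simpa using LinearMap.finrank_le_finrank_of_injective hf
  · push Not at hex
    have : (LA η z r : Set V6) ⊆ {0} := by
      intro u hu
      have U := (mem_LA _ _ _ _).1 hu
      have hx : u.1 = 0 := by ext j; exact hex u hu j
      have hy : u.2 = 0 := by
        have h0 : ev η u.2 = 0 := by rw [← U.2, hx, ev_zero, zero_mul]
        ext i
        exact zero_of_dvd_abs (hη _ h0 i) (lt_of_le_of_lt ((U.1.2 i).trans (hb i)) hrp)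
      exact Prod.ext hx hy
    have h2 : Submodule.span ℤ (LA η z r : Set V6) = ⊥ := by
      rw [Submodule.span_eq_bot]
      intro x hx; exact this hx
    rw [h2]; simp

lemma card_bx_le (r : Fin 3 → ℝ) (hr : ∀ i, 0 ≤ r i) :
    ((bx r).card : ℝ) ≤ ∏ i, (2 * r i + 1) := by
  rw [bx, Fintype.card_piFinset]
  push_cast
  refine Finset.prod_le_prod (fun _ _ => by positivity) fun i _ => ?_
  rw [Int.card_Icc]
  have h0 : 0 ≤ ⌊r i⌋ := Int.floor_nonneg.2 (hr i)
  have : ((⌊r i⌋ + 1 - -⌊r i⌋).toNat : ℝ) = 2 * (⌊r i⌋ : ℝ) + 1 := by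
    have h : ((⌊r i⌋ + 1 - -⌊r i⌋).toNat : ℤ) = 2 * ⌊r i⌋ + 1 := by omega
    exact_mod_cast h
  rw [this]
  linarith [Int.floor_le (r i)]

lemma le_card_bx (r : Fin 3 → ℝ) (hr : ∀ i, 0 ≤ r i) :
    ∏ i, r i ≤ ((bx r).card : ℝ) := by
  rw [bx, Fintype.card_piFinset]
  push_cast
  refine Finset.prod_le_prod (fun i _ => hr i) fun i _ => ?_
  rw [Int.card_Icc]
  have h0 : 0 ≤ ⌊r i⌋ := Int.floor_nonneg.2 (hr i)
  have : ((⌊r i⌋ + 1 - -⌊r i⌋).toNat : ℝ) = 2 * (⌊r i⌋ : ℝ) + 1 := by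
    have h : ((⌊r i⌋ + 1 - -⌊r i⌋).toNat : ℤ) = 2 * ⌊r i⌋ + 1 := by omega
    exact_mod_cast h
  rw [this]
  have : (0 : ℝ) ≤ ⌊r i⌋ := by exact_mod_cast h0
  linarith [Int.lt_floor_add_one (r i)]

lemma count_z {F : Type} [Field F] {p : ℕ} (η : Fin 3 → F) (hη : Ind p η) (r : Fin 3 → ℝ)
    (hr : ∀ i, r i < p) (Zs : Finset F) (h : ∀ z ∈ Zs, ∃ a ∈ LA η z r, a ≠ 0) :
    Zs.card ≤ (bx r).card ^ 2 := by
  choose! f hf hf0 using h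
  rw [sq, ← Finset.card_product]
  refine Finset.card_le_card_of_injOn f ?_ ?_
  · intro z hz
    exact (Finset.mem_filter.1 (hf z hz)).1
  · intro z hz w hw hzw
    have A := (mem_LA _ _ _ _).1 (hf z hz)
    have B := (mem_LA _ _ _ _).1 (hf w hw)
    rw [← hzw] at B
    have hne : ev η (f z).1 ≠ 0 := by
      intro h0
      apply hf0 z hz
      have h1 : ev η (f z).2 = 0 := by rw [← A.2, h0, zero_mul]
      refine Prod.ext ?_ ?_
      · ext i
        exact zero_of_dvd_abs (hη _ h0 i) (lt_of_le_of_lt (A.1.1 i) (hr i))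
      · ext i
        exact zero_of_dvd_abs (hη _ h1 i) (lt_of_le_of_lt (A.1.2 i) (hr i))
    exact mul_left_cancel₀ hne (A.2.trans B.2.symm)

lemma exists_ne_zero_of_one_lt {F : Type} [Field F] (η : Fin 3 → F) (z : F) (r : Fin 3 → ℝ)
    (h : 1 < (LA η z r).card) : ∃ a ∈ LA η z r, a ≠ 0 := by
  obtain ⟨a, ha, b, hb, hab⟩ := Finset.one_lt_card.1 h
  by_cases h0 : a = 0
  · exact ⟨b, hb, fun hb0 => hab (h0.trans hb0.symm)⟩
  · exact ⟨a, ha, h0⟩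

set_option maxHeartbeats 1000000 in
lemma mainU {F : Type} [Field F] [Fintype F] {p : ℕ} [Fact p.Prime] [Algebra (ZMod p) F]
    (h3 : Module.finrank (ZMod p) F = 3) (η : Fin 3 → F) (hη : Ind p η)
    {m a b : Fin 3} (hc : ∀ i, i = m ∨ i = a ∨ i = b) (hma : m ≠ a) (hmb : m ≠ b) (hab : a ≠ b)
    (h : Fin 3 → ℝ) (hm : 1 / 10 ≤ h m) (hle1 : h m ≤ h a) (hle2 : h a ≤ h b)
    (hp : h b < p / 2) (hp2 : 2 * h b ^ 2 ≤ p * h m ^ 2) (Zs : Finset F) (t : ℝ) (ht : 2 ≤ t)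
    (hZ : ∀ z ∈ Zs, (¬ ∃ t : ℤ, z = (t : F)) ∧
      Module.finrank ℤ (Submodule.span ℤ (LA η z h : Set V6)) ≤ 3 ∧ t ≤ (LA η z h).card) :
    (Zs.card : ℝ) * t ^ 2 ≤ 10 ^ 8 * (h m * (h a * h b)) ^ 2 := by
  have hp2' : (2 : ℝ) ≤ p := by exact_mod_cast (Fact.out : p.Prime).two_le
  have hm0 : 0 < h m := by linarith
  have ha0 : 0 < h a := by linarith
  have hb0 : 0 < h b := by linarith
  have hib : ∀ i, h i ≤ h b := by
    intro i; rcases hc i with rfl | rfl | rfl <;> linarith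
  have him : ∀ i, h m ≤ h i := by
    intro i; rcases hc i with rfl | rfl | rfl <;> linarith
  obtain ⟨k, hk1, hk2, hk3⟩ : ∃ k : ℕ, 1 ≤ k ∧ (k : ℝ) ^ 3 < t ∧ t ≤ ((k : ℝ) + 1) ^ 3 := by
    have hex : ∃ n : ℕ, t ≤ (n : ℝ) ^ 3 := by
      obtain ⟨n, hn⟩ := exists_nat_ge t
      refine ⟨n, hn.trans ?_⟩
      have : (1 : ℝ) ≤ n := by linarith
      exact le_self_pow₀ this (by norm_num)
    have hs := Nat.find_spec hex
    have hmin := fun q => Nat.find_min hex (m := q)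
    set n := Nat.find hex
    have hn2 : 2 ≤ n := by
      by_contra hlt
      have : n ≤ 1 := by omega
      have : (n : ℝ) ≤ 1 := by exact_mod_cast this
      have : (n : ℝ) ^ 3 ≤ 1 := pow_le_one₀ (by positivity) this
      linarith
    refine ⟨n - 1, by omega, ?_, ?_⟩
    · have := hmin (n - 1) (by omega)
      exact not_le.1 this
    · have e : ((n - 1 : ℕ) : ℝ) + 1 = n := by
        have : n - 1 + 1 = n := by omega
        exact_mod_cast this
      rw [e]; exact hs
  have hkr : (1 : ℝ) ≤ k := by exact_mod_cast hk1
  have hkpos : (0 : ℝ) < k := by linarith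
  -- short vectors from rank three
  have step : ∀ K : ℕ, 1 ≤ K → ∀ z ∈ Zs, t / (K : ℝ) ^ 3 ≤ (LA η z (fun i => 2 * h i / K)).card := by
    intro K hK z hz
    obtain ⟨-, hr, hcard⟩ := hZ z hz
    have h1 := modk η z h 3 K hK hr
    have h1' : ((LA η z h).card : ℝ) ≤ (K : ℝ) ^ 3 * (LA η z (fun i => 2 * h i / K)).card := by
      exact_mod_cast h1
    have hK0 : (0 : ℝ) < K := by exact_mod_cast hK
    rw [div_le_iff₀ (by positivity)]
    linarith
  rcases Finset.eq_empty_or_nonempty Zs with hE | ⟨z0, hz0⟩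
  · rw [hE]; simp; positivity
  by_cases hcase : (k : ℝ) ≤ 4 * h m
  · -- generic case
    have hcnt := count_z η hη (fun i => 2 * h i / k) (fun i => by
      rw [div_lt_iff₀ hkpos]
      have := hib i
      nlinarith) Zs (fun z hz => by
        apply exists_ne_zero_of_one_lt
        have h1 := step k hk1 z hz
        have h2 : 1 < t / (k : ℝ) ^ 3 := by
          rw [one_lt_div (by positivity)]; exact hk2
        exact_mod_cast h2.trans_le h1)
    have hbx := card_bx_le (fun i => 2 * h i / k) (fun i => by
      have := him i
      have : 0 < h i := by linarith
      positivity)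
    have hbx2 : ((bx (fun i => 2 * h i / k)).card : ℝ) ≤ ∏ i, (8 * h i / k) := by
      refine hbx.trans (Finset.prod_le_prod ?_ ?_)
      · intro i _
        have := him i
        have : 0 < h i := by linarith
        positivity
      · intro i _
        have h1 : 1 ≤ 4 * h i / k := by
          rw [le_div_iff₀ hkpos]; linarith [him i]
        have e1 : 2 * (2 * h i / k) = 4 * h i / k := by ring
        have e2 : 8 * h i / k = 4 * h i / k + 4 * h i / k := by ring
        simp only [e1, e2]; linarith
    rw [prod_mab hc hma hmb hab] at hbx2
    have hcnt' : (Zs.card : ℝ) ≤ ((bx (fun i => 2 * h i / k)).card : ℝ) ^ 2 := by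
      exact_mod_cast hcnt
    have hZc : (Zs.card : ℝ) ≤ (8 * h m / k * (8 * h a / k * (8 * h b / k))) ^ 2 :=
      hcnt'.trans (by gcongr)
    have ht2 : t ≤ 8 * (k : ℝ) ^ 3 := by
      refine hk3.trans ?_
      have : ((k : ℝ) + 1) ^ 3 ≤ (2 * k) ^ 3 := by gcongr; linarith
      calc _ ≤ _ := this
        _ = _ := by ring
    calc (Zs.card : ℝ) * t ^ 2
        ≤ (8 * h m / k * (8 * h a / k * (8 * h b / k))) ^ 2 * (8 * (k : ℝ) ^ 3) ^ 2 := by gcongr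
      _ = 8 ^ 8 * (h m * (h a * h b)) ^ 2 := by field_simp
      _ ≤ _ := by gcongr; norm_num
  · -- degenerate case
    push Not at hcase
    set K : ℕ := ⌊4 * h m⌋₊ + 1 with hK
    have hK1 : 1 ≤ K := by omega
    have hKk : K ≤ k := by
      have : ⌊4 * h m⌋₊ < k := (Nat.floor_lt (by positivity)).2 hcase
      omega
    have hKlow : 4 * h m < K := by
      rw [hK]; push_cast; exact Nat.lt_floor_add_one _
    have hKup : (K : ℝ) ≤ 14 * h m := by
      rw [hK]; push_cast
      have := Nat.floor_le (show 0 ≤ 4 * h m by positivity)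
      linarith
    have hK0 : (0 : ℝ) < K := by exact_mod_cast hK1
    have htK : (K : ℝ) ^ 3 < t := by
      refine lt_of_le_of_lt ?_ hk2
      have : (K : ℝ) ≤ k := by exact_mod_cast hKk
      gcongr
    set T : ℝ := t / (K : ℝ) ^ 3 with hT
    have hT1 : 1 < T := by rw [hT, one_lt_div (by positivity)]; exact htK
    obtain ⟨q, hq1, hq2, hq3⟩ : ∃ q : ℕ, 1 ≤ q ∧ (q : ℝ) < T ∧ T ≤ 2 * q := by
      have hc1 : 2 ≤ ⌈T⌉₊ := Nat.lt_ceil.2 (by simpa using hT1)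
      have hlt := Nat.ceil_lt_add_one (show 0 ≤ T by linarith)
      have hge := Nat.le_ceil T
      have e : ((⌈T⌉₊ - 1 : ℕ) : ℝ) = ⌈T⌉₊ - 1 := by
        rw [Nat.cast_sub (by omega)]; simp
      have hc2 : (2 : ℝ) ≤ ⌈T⌉₊ := by exact_mod_cast hc1
      refine ⟨⌈T⌉₊ - 1, by omega, ?_, ?_⟩ <;> rw [e] <;> linarith
    have hq0 : (0 : ℝ) < q := by exact_mod_cast hq1
    have hq1r : (1 : ℝ) ≤ q := by exact_mod_cast hq1
    set r : Fin 3 → ℝ := fun i => 2 * h i / K with hr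
    set r' : Fin 3 → ℝ := fun i => 2 * r i / q with hr'
    have hrpos : ∀ i, 0 < r i := by
      intro i
      have := him i
      have : 0 < h i := by linarith
      simp only [hr]; positivity
    have hrm : 2 * r m < 1 := by
      have : 2 * r m = 4 * h m / K := by simp only [hr]; ring
      rw [this, div_lt_one hK0]; exact hKlow
    have hrb : ∀ i, r i ≤ r b := by
      intro i; simp only [hr]; have := hib i; gcongr
    have hrp2 : 2 * r b ^ 2 < p := by
      have : 2 * r b ^ 2 = 8 * h b ^ 2 / (K : ℝ) ^ 2 := by simp only [hr]; ring
      rw [this, div_lt_iff₀ (by positivity)]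
      have h1 : (4 * h m) ^ 2 < (K : ℝ) ^ 2 := by gcongr
      have h2 : (p : ℝ) * (4 * h m) ^ 2 < p * (K : ℝ) ^ 2 := by gcongr
      nlinarith [sq_nonneg (h b)]
    have hrp : 2 * r b < p := by
      by_contra hcon
      push Not at hcon
      nlinarith [hrpos b]
    have hr'p : ∀ i, r' i < p := by
      intro i
      simp only [hr']
      rw [div_lt_iff₀ hq0]
      have := hrb i
      nlinarith
    have hr'm : r' m < 1 := by
      simp only [hr']
      rw [div_lt_iff₀ hq0]; linarith
    have hvec : ∀ z ∈ Zs, ∃ u ∈ LA η z r', u ≠ 0 := by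
      intro z hz
      apply exists_ne_zero_of_one_lt
      have h1 := step K hK1 z hz
      have hrk := rank1 h3 η hη hc hma hmb hab z (hZ z hz).1 r (by linarith [hrpos m]) hrb hrp2
        (by linarith [hrpos b])
      have h2 := modk η z r 1 q hq1 hrk
      have h2' : ((LA η z r).card : ℝ) ≤ (q : ℝ) * (LA η z r').card := by
        rw [pow_one] at h2
        exact_mod_cast h2
      have h4 : (q : ℝ) * 1 < q * (LA η z r').card := by
        have : T ≤ (LA η z r).card := h1
        linarith
      exact_mod_cast lt_of_mul_lt_mul_left h4 hq0.le
    have hr'a : 1 ≤ r' a := by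
      by_contra hlt
      push Not at hlt
      obtain ⟨u, hu, hu0⟩ := hvec z0 hz0
      have U := (mem_LA _ _ _ _).1 hu
      have e1 := int_zero_of_lt_one (U.1.1 m) hr'm
      have e2 := int_zero_of_lt_one (U.1.2 m) hr'm
      have e3 := int_zero_of_lt_one (U.1.1 a) hlt
      have e4 := int_zero_of_lt_one (U.1.2 a) hlt
      have E := U.2
      have hCh : CharP F p := charP_of_injective_algebraMap (algebraMap (ZMod p) F).injective p
      have hne : ev η u.1 ≠ 0 := by
        intro h0
        apply hu0
        have h1 : ev η u.2 = 0 := by rw [← U.2, h0, zero_mul]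
        refine Prod.ext ?_ ?_
        · ext i
          exact zero_of_dvd_abs (hη _ h0 i) (lt_of_le_of_lt (U.1.1 i) (hr'p i))
        · ext i
          exact zero_of_dvd_abs (hη _ h1 i) (lt_of_le_of_lt (U.1.2 i) (hr'p i))
      have f1 : ev η u.1 = u.1 b * η b := by
        rw [ev, sum_mab hc hma hmb hab]; simp [e1, e3]
      have f2 : ev η u.2 = u.2 b * η b := by
        rw [ev, sum_mab hc hma hmb hab]; simp [e2, e4]
      rw [f1] at hne
      rw [f1, f2] at E
      have hxb : (u.1 b : F) ≠ 0 := left_ne_zero_of_mul hne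
      have hηb : η b ≠ 0 := right_ne_zero_of_mul hne
      have hlin : (u.1 b : F) * z0 = u.2 b := by
        apply mul_right_cancel₀ hηb
        linear_combination E
      apply hxb
      apply hquad h3 z0 (hZ z0 hz0).1 (u.1 b) (u.2 b) 0 0
      rw [hlin]; simp
    have hr'b : 1 ≤ r' b := by
      refine hr'a.trans ?_
      simp only [hr']; have := hrb a; gcongr
    let r2 : Fin 3 → ℝ := Function.update r' m 0
    have hr2m : r2 m = 0 := Function.update_self _ _ _
    have hr2a : r2 a = r' a := Function.update_of_ne hma.symm _ _
    have hr2b : r2 b = r' b := Function.update_of_ne hmb.symm _ _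
    have hr2v : ∀ i, i = m ∧ r2 i = 0 ∨ r2 i = r' i := by
      intro i
      rcases hc i with rfl | rfl | rfl
      · exact Or.inl ⟨rfl, hr2m⟩
      · exact Or.inr hr2a
      · exact Or.inr hr2b
    have hr'0 : ∀ i, 0 < r' i := by
      intro i; have := hrpos i; simp only [hr']; positivity
    have hcnt := count_z η hη r2 (fun i => by
      rcases hr2v i with ⟨-, e⟩ | e <;> rw [e]
      · linarith
      · exact hr'p i) Zs (fun z hz => by
        obtain ⟨u, hu, hu0⟩ := hvec z hz
        have U := (mem_LA _ _ _ _).1 hu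
        refine ⟨u, (mem_LA _ _ _ _).2 ⟨⟨fun i => ?_, fun i => ?_⟩, U.2⟩, hu0⟩
        · rcases hr2v i with ⟨e0, e⟩ | e <;> rw [e]
          · rw [e0, int_zero_of_lt_one (U.1.1 m) hr'm]; simp
          · exact U.1.1 i
        · rcases hr2v i with ⟨e0, e⟩ | e <;> rw [e]
          · rw [e0, int_zero_of_lt_one (U.1.2 m) hr'm]; simp
          · exact U.1.2 i)
    have hbx := card_bx_le r2 (fun i => by
      rcases hr2v i with ⟨-, e⟩ | e <;> rw [e]
      exact (hr'0 i).le)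
    rw [prod_mab hc hma hmb hab, hr2m, hr2a, hr2b] at hbx
    have hcnt' : (Zs.card : ℝ) ≤ ((bx r2).card : ℝ) ^ 2 := by exact_mod_cast hcnt
    have hbx2 : ((bx r2).card : ℝ) ≤ 3 * r' a * (3 * r' b) := by
      refine hbx.trans ?_
      have : (2 * r' a + 1) * (2 * r' b + 1) ≤ 3 * r' a * (3 * r' b) := by
        gcongr <;> linarith
      linarith
    have hval : ∀ i, r' i ≤ 8 * h i * (K : ℝ) ^ 2 / t := by
      intro i
      have hi : 0 < h i := by linarith [him i]
      have e : r' i = 4 * h i / (K * q) := by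
        change 2 * (2 * h i / K) / q = _
        field_simp; norm_num
      rw [e, div_le_div_iff₀ (by positivity) (by linarith)]
      have : t ≤ 2 * q * (K : ℝ) ^ 3 := by
        rw [hT, div_le_iff₀ (by positivity)] at hq3; exact hq3
      calc 4 * h i * t ≤ 4 * h i * (2 * q * (K : ℝ) ^ 3) := by gcongr
        _ = 8 * h i * (K : ℝ) ^ 2 * (K * q) := by ring
    have ht0 : 0 < t := by linarith
    have hZc : (Zs.card : ℝ) ≤
        (3 * (8 * h a * (K : ℝ) ^ 2 / t) * (3 * (8 * h b * (K : ℝ) ^ 2 / t))) ^ 2 := by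
      refine hcnt'.trans ?_
      have := hval a
      have := hval b
      have := hr'0 a
      have := hr'0 b
      refine pow_le_pow_left₀ (by positivity) (hbx2.trans ?_) 2
      gcongr
    have hK6 : (K : ℝ) ^ 6 / t ^ 2 ≤ 1 := by
      rw [div_le_one (by positivity)]
      calc (K : ℝ) ^ 6 = ((K : ℝ) ^ 3) ^ 2 := by ring
        _ ≤ t ^ 2 := by gcongr
    calc (Zs.card : ℝ) * t ^ 2
        ≤ (3 * (8 * h a * (K : ℝ) ^ 2 / t) * (3 * (8 * h b * (K : ℝ) ^ 2 / t))) ^ 2 * t ^ 2 := by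
          gcongr
      _ = 576 ^ 2 * (h a * h b) ^ 2 * (K : ℝ) ^ 2 * ((K : ℝ) ^ 6 / t ^ 2) := by
          field_simp; norm_num
      _ ≤ 576 ^ 2 * (h a * h b) ^ 2 * (14 * h m) ^ 2 * 1 := by gcongr
      _ = (576 ^ 2 * 14 ^ 2) * (h m * (h a * h b)) ^ 2 := by ring
      _ ≤ _ := by gcongr; norm_num

lemma exists_dual {F : Type} [Field F] [Fintype F] {p : ℕ} [Fact p.Prime] [Algebra (ZMod p) F]
    (h3 : Module.finrank (ZMod p) F = 3) (ω : Fin 3 → F) (hω : Ind p ω) :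
    ∃ η : Fin 3 → F, Ind p η ∧ ∀ u x : Fin 3 → ℤ,
      Algebra.trace (ZMod p) F (ev η u * ev ω x) = ((∑ i, u i * x i : ℤ) : ZMod p) := by
  have hli : LinearIndependent (ZMod p) ω := by
    rw [Fintype.linearIndependent_iff]
    intro g hg i
    have h1 : ev ω (fun i => ((g i).val : ℤ)) = 0 := by
      rw [← hg, ev]
      refine Finset.sum_congr rfl fun i _ => ?_
      rw [Algebra.smul_def, ← map_intCast (algebraMap (ZMod p) F)]
      simp
    have h2 := hω _ h1 i
    have h4 := (ZMod.intCast_zmod_eq_zero_iff_dvd ((g i).val : ℤ) p).2 h2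
    simpa using h4
  let B := basisOfLinearIndependentOfCardEqFinrank hli (by rw [h3]; simp)
  have hB : ∀ i, B i = ω i := fun i => by simp [B]
  let η := (Algebra.traceForm (ZMod p) F).dualBasis (traceForm_nondegenerate (ZMod p) F) B
  have hd : ∀ i j, Algebra.trace (ZMod p) F (η i * ω j) = if j = i then 1 else 0 := by
    intro i j
    have := LinearMap.BilinForm.apply_dualBasis_left (traceForm_nondegenerate (ZMod p) F) B i j
    rw [hB, Algebra.traceForm_apply] at this
    exact this
  have hpair : ∀ u x : Fin 3 → ℤ,
      Algebra.trace (ZMod p) F (ev η u * ev ω x) = ((∑ i, u i * x i : ℤ) : ZMod p) := by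
    intro u x
    rw [ev, ev, Finset.sum_mul_sum, map_sum]
    push_cast
    refine Finset.sum_congr rfl fun i _ => ?_
    rw [map_sum, Finset.sum_eq_single i]
    · have e : (u i : F) * η i * ((x i : F) * ω i) = ((u i * x i : ℤ) : ZMod p) • (η i * ω i) := by
        rw [Algebra.smul_def, map_intCast]; push_cast; ring
      rw [e, map_smul, hd]; simp
    · intro j _ hj
      have e : (u i : F) * η i * ((x j : F) * ω j) = ((u i * x j : ℤ) : ZMod p) • (η i * ω j) := by
        rw [Algebra.smul_def, map_intCast]; push_cast; ring
      rw [e, map_smul, hd]; simp [hj]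
    · simp
  refine ⟨η, ?_, hpair⟩
  intro c hc i
  have := hpair c (Pi.single i 1)
  rw [hc, zero_mul, map_zero] at this
  apply (ZMod.intCast_zmod_eq_zero_iff_dvd _ p).1
  rw [this]
  congr 1
  rw [Finset.sum_eq_single i]
  · simp
  · intro j _ hj; simp [hj]
  · simp

lemma abs_sum_le {u x : Fin 3 → ℤ} {r H : Fin 3 → ℝ} {c : ℝ} (hu : ∀ i, |(u i : ℝ)| ≤ r i)
    (hx : ∀ i, |(x i : ℝ)| ≤ H i) (hrc : ∀ i, H i * r i ≤ c) :
    |((∑ i, u i * x i : ℤ) : ℝ)| ≤ 3 * c := by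
  push_cast
  refine (Finset.abs_sum_le_sum_abs _ _).trans ?_
  have : ∀ i ∈ (Finset.univ : Finset (Fin 3)), |(u i : ℝ) * x i| ≤ c := by
    intro i _
    rw [abs_mul]
    refine le_trans ?_ (hrc i)
    rw [mul_comm]
    have h0 : 0 ≤ H i := (abs_nonneg _).trans (hx i)
    exact mul_le_mul (hx i) (hu i) (abs_nonneg _) h0
  refine (Finset.sum_le_card_nsmul _ _ _ this).trans ?_
  simp

lemma rank_sum {F : Type} [Field F] [Fintype F] {p : ℕ} [Fact p.Prime] [Algebra (ZMod p) F]
    (ω η : Fin 3 → F) (hpair : ∀ u x : Fin 3 → ℤ,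
      Algebra.trace (ZMod p) F (ev η u * ev ω x) = ((∑ i, u i * x i : ℤ) : ZMod p))
    (z : F) (H r : Fin 3 → ℝ) (hHr : ∀ i, H i * r i ≤ p / 18) :
    Module.finrank ℤ (Submodule.span ℤ (LA ω z H : Set V6)) +
      Module.finrank ℤ (Submodule.span ℤ (LA η z r : Set V6)) ≤ 6 := by
  set A := Submodule.span ℤ (LA ω z H : Set V6) with hA
  set W := Submodule.span ℤ (LA η z r : Set V6) with hW
  have hp0 : (0 : ℝ) < p := by exact_mod_cast (Fact.out : p.Prime).pos
  have h0 : ∀ a ∈ LA ω z H, ∀ w ∈ LA η z r,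
      (∑ i, w.1 i * a.2 i) - ∑ i, w.2 i * a.1 i = 0 := by
    intro a ha w hw
    have Ha := (mem_LA _ _ _ _).1 ha
    have Hw := (mem_LA _ _ _ _).1 hw
    apply zero_of_dvd_abs (p := p)
    · apply (ZMod.intCast_zmod_eq_zero_iff_dvd _ p).1
      rw [Int.cast_sub, ← hpair, ← hpair, ← Ha.2, ← Hw.2, sub_eq_zero]
      congr 1; ring
    · rw [Int.cast_sub]
      have h1 := abs_sum_le Hw.1.1 Ha.1.2 hHr
      have h2 := abs_sum_le Hw.1.2 Ha.1.1 hHr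
      refine lt_of_le_of_lt (abs_sub _ _) ?_
      linarith
  have h1 : ∀ a ∈ A, ∀ w ∈ W, (∑ i, w.1 i * a.2 i) - ∑ i, w.2 i * a.1 i = 0 := by
    intro a ha
    induction ha using Submodule.span_induction with
    | mem a ha =>
      intro w hw
      induction hw using Submodule.span_induction with
      | mem w hw => exact h0 a ha w hw
      | zero => simp
      | add x y _ _ hx hy =>
        simp only [Prod.fst_add, Prod.snd_add, Pi.add_apply, add_mul, Finset.sum_add_distrib]
        linarith
      | smul n x _ hx =>
        simp only [Prod.smul_fst, Prod.smul_snd, Pi.smul_apply, smul_eq_mul, mul_assoc,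
          ← Finset.mul_sum, ← mul_sub, hx, mul_zero]
    | zero => simp
    | add x y _ _ hx hy =>
      intro w hw
      have hx := hx w hw
      have hy := hy w hw
      simp only [Prod.fst_add, Prod.snd_add, Pi.add_apply, mul_add, Finset.sum_add_distrib]
      linarith
    | smul n x _ hx =>
      intro w hw
      have hx := hx w hw
      simp only [Prod.smul_fst, Prod.smul_snd, Pi.smul_apply, smul_eq_mul, mul_left_comm _ n,
          ← Finset.mul_sum, ← mul_sub, hx, mul_zero]
  let J : V6 →ₗ[ℤ] V6 :=
    (-(LinearMap.snd ℤ (Fin 3 → ℤ) (Fin 3 → ℤ))).prod (LinearMap.fst ℤ (Fin 3 → ℤ) (Fin 3 → ℤ))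
  let f : (A × W) →ₗ[ℤ] V6 := LinearMap.coprod A.subtype (J.comp W.subtype)
  have hf : Function.Injective f := by
    rw [injective_iff_map_eq_zero]
    rintro ⟨⟨a, ha⟩, ⟨w, hw⟩⟩ hv
    have e : a + (-w.2, w.1) = 0 := hv
    have e1 : ∀ i, w.2 i = a.1 i := by
      intro i
      have := congrFun (congrArg Prod.fst e) i
      simp at this
      linarith
    have e2 : ∀ i, w.1 i = - a.2 i := by
      intro i
      have := congrFun (congrArg Prod.snd e) i
      simp at this
      linarith
    have h2 := h1 a ha w hw
    simp only [e1, e2] at h2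
    rw [← Finset.sum_sub_distrib] at h2
    have h4 : ∑ i, (a.2 i * a.2 i + a.1 i * a.1 i) = 0 := by
      rw [← neg_eq_zero, ← Finset.sum_neg_distrib, ← h2]
      refine Finset.sum_congr rfl fun i _ => by ring
    rw [Finset.sum_eq_zero_iff_of_nonneg
      (fun i _ => add_nonneg (mul_self_nonneg _) (mul_self_nonneg _))] at h4
    have h5 : ∀ i, a.1 i = 0 ∧ a.2 i = 0 := by
      intro i
      have := h4 i (Finset.mem_univ i)
      constructor <;> nlinarith
    have ha0 : a = 0 := Prod.ext (funext fun i => (h5 i).1) (funext fun i => (h5 i).2)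
    have hw0 : w = 0 := by
      refine Prod.ext (funext fun i => ?_) (funext fun i => ?_)
      · rw [e2, (h5 i).2]; simp
      · rw [e1, (h5 i).1]; simp
    subst ha0 hw0
    rfl
  have h6 := LinearMap.finrank_le_finrank_of_injective hf
  rw [Module.finrank_prod, Module.finrank_prod] at h6
  simpa using h6

lemma re_stdAddChar {p : ℕ} [NeZero p] (n : ℤ) (h : |(n : ℝ)| ≤ p / 6) :
    1 / 2 ≤ (ZMod.stdAddChar (n : ZMod p)).re := by
  have hp0 : (0 : ℝ) < p := by exact_mod_cast Nat.pos_of_ne_zero (NeZero.ne p)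
  rw [ZMod.stdAddChar_coe]
  have e : (2 * (Real.pi : ℂ) * Complex.I * n / p) =
      ((2 * Real.pi * n / p : ℝ) : ℂ) * Complex.I := by push_cast; ring
  rw [e, Complex.exp_ofReal_mul_I_re, ← Real.cos_abs, ← Real.cos_pi_div_three]
  apply Real.cos_le_cos_of_nonneg_of_le_pi (abs_nonneg _)
  · linarith [Real.pi_pos]
  · rw [abs_div, abs_mul, abs_mul, abs_of_pos Real.pi_pos, abs_of_pos hp0,
      abs_of_pos (zero_lt_two' ℝ), div_le_iff₀ hp0]
    nlinarith [Real.pi_pos]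

lemma parseval {F : Type} [Field F] [Fintype F] (ψ : AddChar F ℂ) (hψ : ψ.IsPrimitive)
    (X : Finset F) :
    ∑ s : F, Complex.normSq (∑ x ∈ X, ψ (s * x)) = (Fintype.card F : ℝ) * X.card := by
  have : ((∑ s : F, Complex.normSq (∑ x ∈ X, ψ (s * x)) : ℝ) : ℂ) =
      ((Fintype.card F : ℝ) * X.card : ℝ) := by
    push_cast
    have e : ∀ s : F, (Complex.normSq (∑ x ∈ X, ψ (s * x)) : ℂ) =
        ∑ x ∈ X, ∑ y ∈ X, ψ (s * (x - y)) := by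
      intro s
      rw [← Complex.mul_conj, map_sum, Finset.sum_mul_sum]
      refine Finset.sum_congr rfl fun x _ => Finset.sum_congr rfl fun y _ => ?_
      rw [← AddChar.map_neg_eq_conj, ← AddChar.map_add_eq_mul]
      congr 1; ring
    simp_rw [e]
    rw [Finset.sum_comm]
    have e2 : ∀ x ∈ X, ∑ s : F, ∑ y ∈ X, ψ (s * (x - y)) = Fintype.card F := by
      intro x hx
      rw [Finset.sum_comm]
      simp_rw [AddChar.sum_mulShift _ hψ, sub_eq_zero]
      rw [Finset.sum_eq_single x]
      · simp
      · intro y _ hy; simp [hy.symm]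
      · intro h; exact absurd hx h
    rw [Finset.sum_congr rfl e2]
    simp [mul_comm]
  exact_mod_cast this

lemma transfer {F : Type} [Field F] [Fintype F] {p : ℕ} [Fact p.Prime] [Algebra (ZMod p) F]
    (ω η : Fin 3 → F) (hω : Ind p ω) (hpair : ∀ u x : Fin 3 → ℤ,
      Algebra.trace (ZMod p) F (ev η u * ev ω x) = ((∑ i, u i * x i : ℤ) : ZMod p))
    (z : F) (H r : Fin 3 → ℝ) (hHr : ∀ i, H i * r i ≤ p / 36) (hH : ∀ i, H i < p / 2) :
    ((bx r).card : ℝ) ^ 2 * (LA ω z H).card ≤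
      4 * (Fintype.card F : ℝ) * (LA η z (fun i => 2 * r i)).card := by
  let ψ : AddChar F ℂ := (ZMod.stdAddChar (N := p)).compAddMonoidHom
    (Algebra.trace (ZMod p) F).toAddMonoidHom
  have hψv : ∀ x, ψ x = ZMod.stdAddChar (Algebra.trace (ZMod p) F x) := fun x => rfl
  have hψ : ψ.IsPrimitive := by
    apply AddChar.IsPrimitive.of_ne_one
    intro h1
    have h2 : ψ (ev η (Pi.single 0 1) * ev ω (Pi.single 0 1)) = 1 := by rw [h1]; rfl
    rw [hψv, hpair] at h2
    have h4 := ZMod.injective_stdAddChar (N := p) (h2.trans (AddChar.map_zero_eq_one _).symm)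
    simp [Fin.sum_univ_three] at h4
  let X : Finset F := (LA ω z H).image (fun a => ev ω a.1)
  have hX : X.card = (LA ω z H).card := by
    apply Finset.card_image_of_injOn
    intro a ha b hb hab
    have A := (mem_LA _ _ _ _).1 ha
    have B := (mem_LA _ _ _ _).1 hb
    have hab : ev ω a.1 = ev ω b.1 := hab
    have hab2 : ev ω a.2 = ev ω b.2 := by rw [← A.2, ← B.2, hab]
    have key : ∀ x y : Fin 3 → ℤ, (∀ i, |(x i : ℝ)| ≤ H i) → (∀ i, |(y i : ℝ)| ≤ H i) →
        ev ω x = ev ω y → x = y := by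
      intro x y hx hy hxy
      rw [← sub_eq_zero, ← ev_sub] at hxy
      ext i
      have h1 := zero_of_dvd_abs (hω _ hxy i) (by
        rw [Pi.sub_apply, Int.cast_sub]
        refine lt_of_le_of_lt (abs_sub _ _) ?_
        have := hx i
        have := hy i
        have := hH i
        linarith)
      rw [Pi.sub_apply] at h1
      linarith
    exact Prod.ext (key _ _ A.1.1 B.1.1 hab) (key _ _ A.1.2 B.1.2 hab2)
  let g : V6 → F := fun w => ev η w.1 + ev η w.2 * z
  let W : Finset V6 := bx r ×ˢ bx r
  have hW : W.card = (bx r).card ^ 2 := by simp [W, sq]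
  let S : Finset F := W.image g
  have hre : ∀ s ∈ S, ((X.card : ℝ) / 2) ^ 2 ≤ Complex.normSq (∑ x ∈ X, ψ (s * x)) := by
    intro s hs
    obtain ⟨w, hw, rfl⟩ := Finset.mem_image.1 hs
    obtain ⟨hw1, hw2⟩ := Finset.mem_product.1 hw
    rw [mem_bx] at hw1 hw2
    have h1 : (X.card : ℝ) / 2 ≤ (∑ x ∈ X, ψ (g w * x)).re := by
      rw [Complex.re_sum]
      have : ∀ x ∈ X, (1 / 2 : ℝ) ≤ (ψ (g w * x)).re := by
        intro x hx
        obtain ⟨a, ha, rfl⟩ := Finset.mem_image.1 hx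
        have A := (mem_LA _ _ _ _).1 ha
        have e : g w * ev ω a.1 = ev η w.1 * ev ω a.1 + ev η w.2 * ev ω a.2 := by
          rw [← A.2]; simp only [g]; ring
        rw [hψv, e, map_add, hpair, hpair, ← Int.cast_add]
        apply re_stdAddChar
        rw [Int.cast_add]
        refine (abs_add_le _ _).trans ?_
        have h1 := abs_sum_le hw1 A.1.1 hHr
        have h2 := abs_sum_le hw2 A.1.2 hHr
        linarith
      have := Finset.card_nsmul_le_sum X _ _ this
      rw [nsmul_eq_mul] at this
      linarith
    rw [Complex.normSq_apply]
    have : (0 : ℝ) ≤ X.card := by positivity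
    nlinarith [mul_self_nonneg (∑ x ∈ X, ψ (g w * x)).im]
  have hpars := parseval ψ hψ X
  have hS : (S.card : ℝ) * ((X.card : ℝ) / 2) ^ 2 ≤ (Fintype.card F : ℝ) * X.card := by
    rw [← hpars]
    have h1 := Finset.card_nsmul_le_sum S _ _ hre
    rw [nsmul_eq_mul] at h1
    refine h1.trans ?_
    exact Finset.sum_le_sum_of_subset_of_nonneg (Finset.subset_univ _)
      (fun _ _ _ => Complex.normSq_nonneg _)
  have hfib := Finset.card_le_mul_card_image (f := g) W (LA η z (fun i => 2 * r i)).card (by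
    intro y hy
    obtain ⟨w0, hw0, rfl⟩ := Finset.mem_image.1 hy
    obtain ⟨h01, h02⟩ := Finset.mem_product.1 hw0
    rw [mem_bx] at h01 h02
    refine Finset.card_le_card_of_injOn (fun w => (w.2 - w0.2, w0.1 - w.1)) ?_ ?_
    · intro w hw
      obtain ⟨hw, hgw⟩ := Finset.mem_filter.1 hw
      obtain ⟨h1, h2⟩ := Finset.mem_product.1 hw
      rw [mem_bx] at h1 h2
      refine (mem_LA _ _ _ _).2 ⟨⟨fun i => ?_, fun i => ?_⟩, ?_⟩
      · simp only [Pi.sub_apply, Int.cast_sub]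
        refine (abs_sub _ _).trans ?_
        linarith [h2 i, h02 i]
      · simp only [Pi.sub_apply, Int.cast_sub]
        refine (abs_sub _ _).trans ?_
        linarith [h1 i, h01 i]
      · simp only [ev_sub]
        simp only [g] at hgw
        linear_combination hgw
    · intro w _ v _ hwv
      simp only [Prod.mk.injEq] at hwv
      exact Prod.ext (sub_right_injective hwv.2) (sub_left_injective hwv.1))
  have hfib' : ((bx r).card : ℝ) ^ 2 ≤ (LA η z (fun i => 2 * r i)).card * S.card := by
    rw [hW] at hfib
    exact_mod_cast hfib
  rw [← hX]
  rcases Nat.eq_zero_or_pos X.card with h0 | h0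
  · rw [h0, Nat.cast_zero, mul_zero]; positivity
  · have hX0 : (0 : ℝ) < X.card := by exact_mod_cast h0
    have hS' : (S.card : ℝ) * X.card ≤ 4 * Fintype.card F := by
      have : ((S.card : ℝ) * X.card) * X.card ≤ (4 * Fintype.card F) * X.card := by nlinarith
      exact le_of_mul_le_mul_right this hX0
    calc ((bx r).card : ℝ) ^ 2 * X.card
        ≤ ((LA η z (fun i => 2 * r i)).card * S.card) * X.card := by gcongr
      _ = (LA η z (fun i => 2 * r i)).card * (S.card * X.card) := by ring
      _ ≤ (LA η z (fun i => 2 * r i)).card * (4 * Fintype.card F) := by gcongr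
      _ = _ := by ring

lemma weak {F : Type} [Field F] [Fintype F] {p : ℕ} [Fact p.Prime] [Algebra (ZMod p) F]
    (h3 : Module.finrank (ZMod p) F = 3) (hcard : Fintype.card F = p ^ 3) (hp3 : 3 ≤ p)
    (ω : Fin 3 → F) (hω : Ind p ω)
    (H : Fin 3 → ℝ) (hH0 : 1 ≤ H 0) (hH1 : H 0 ≤ H 1) (hH2 : H 1 ≤ H 2) (hHp : 2 * H 2 ^ 2 < p)
    (Zs : Finset F) (t : ℝ) (ht : 1 ≤ t)
    (hZ : ∀ z ∈ Zs, (¬ ∃ t : ℤ, z = (t : F)) ∧ (∃ a ∈ LA ω z H, a ≠ 0) ∧ t ≤ (LA ω z H).card) :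
    (Zs.card : ℝ) * t ^ 2 ≤ 10 ^ 9 * (4 * 36 ^ 6) ^ 2 * (H 0 * (H 1 * H 2)) ^ 2 := by
  have hp3' : (3 : ℝ) ≤ p := by exact_mod_cast hp3
  have hp0 : (0 : ℝ) < p := by linarith
  have c012 : ∀ i : Fin 3, i = 0 ∨ i = 1 ∨ i = 2 := by decide
  have c210 : ∀ i : Fin 3, i = 2 ∨ i = 1 ∨ i = 0 := by decide
  have n1 : (0 : Fin 3) ≠ 1 := by decide
  have n2 : (0 : Fin 3) ≠ 2 := by decide
  have n3 : (1 : Fin 3) ≠ 2 := by decide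
  have hHi : ∀ i, 1 ≤ H i := by
    intro i; rcases c012 i with rfl | rfl | rfl <;> linarith
  have hHi2 : ∀ i, H i ≤ H 2 := by
    intro i; rcases c012 i with rfl | rfl | rfl <;> linarith
  have hHpi : ∀ i, H i < p / 2 := by
    intro i
    have := hHi2 i
    have := hHi i
    nlinarith
  set P : ℝ := H 0 * (H 1 * H 2) with hP
  have h0 := hHi 0
  have h1 := hHi 1
  have h2 := hHi 2
  have hP0 : 0 < P := by rw [hP]; positivity
  -- trivial bound
  have triv : ∀ Y ⊆ Zs, (Y.card : ℝ) ≤ (27 * P) ^ 2 := by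
    intro Y hY
    have hc := count_z ω hω H (fun i => by linarith [hHpi i]) Y (fun z hz => (hZ z (hY hz)).2.1)
    have hb := card_bx_le H (fun i => by linarith [hHi i])
    have hb2 : ((bx H).card : ℝ) ≤ ∏ i, (3 * H i) := by
      refine hb.trans (Finset.prod_le_prod ?_ ?_)
      · intro i _; have := hHi i; positivity
      · intro i _; have := hHi i; linarith
    rw [prod_mab c012 n1 n2 n3] at hb2
    have hc' : (Y.card : ℝ) ≤ ((bx H).card : ℝ) ^ 2 := by exact_mod_cast hc
    refine hc'.trans ?_
    refine pow_le_pow_left₀ (by positivity) (hb2.trans (le_of_eq ?_)) 2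
    rw [hP]; ring
  by_cases ht2 : t < 2
  · have := triv Zs subset_rfl
    calc (Zs.card : ℝ) * t ^ 2 ≤ (27 * P) ^ 2 * 2 ^ 2 := by gcongr
      _ = (27 ^ 2 * 4) * P ^ 2 := by ring
      _ ≤ _ := by gcongr <;> norm_num
  push Not at ht2
  obtain ⟨η, hη, hpair⟩ := exists_dual h3 ω hω
  set Z1 := Zs.filter (fun z =>
    Module.finrank ℤ (Submodule.span ℤ (LA ω z H : Set V6)) ≤ 3) with hZ1
  set Z2 := Zs.filter (fun z =>
    ¬ Module.finrank ℤ (Submodule.span ℤ (LA ω z H : Set V6)) ≤ 3) with hZ2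
  have hsplit : (Zs.card : ℝ) = Z1.card + Z2.card := by
    have := Finset.card_filter_add_card_filter_not (s := Zs) (fun z =>
      Module.finrank ℤ (Submodule.span ℤ (LA ω z H : Set V6)) ≤ 3)
    exact_mod_cast this.symm
  have b1 : (Z1.card : ℝ) * t ^ 2 ≤ 10 ^ 8 * P ^ 2 := by
    refine mainU h3 ω hω c012 n1 n2 n3 H (by linarith) hH1 hH2 (hHpi 2) ?_ Z1 t ht2 ?_
    · have : (1 : ℝ) ≤ H 0 ^ 2 := one_le_pow₀ h0
      nlinarith
    · intro z hz
      obtain ⟨hz, hr⟩ := Finset.mem_filter.1 hz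
      exact ⟨(hZ z hz).1, hr, (hZ z hz).2.2⟩
  have b2 : (Z2.card : ℝ) * t ^ 2 ≤ 10 ^ 8 * (4 * 36 ^ 6) ^ 2 * P ^ 2 := by
    set M : ℝ := 4 * 36 ^ 6 with hM
    have hM0 : 0 < M := by rw [hM]; positivity
    set ts : ℝ := t * p ^ 3 / (M * P ^ 2) with hts
    by_cases hts2 : ts < 2
    · have htM : t ≤ 2 * M := by
        rw [hts, div_lt_iff₀ (by positivity)] at hts2
        have hPp : P ^ 2 ≤ p ^ 3 := by
          have : P ≤ H 2 * (H 2 * H 2) := by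
            rw [hP]
            have := hHi2 0
            gcongr
          calc P ^ 2 ≤ (H 2 * (H 2 * H 2)) ^ 2 := by gcongr
            _ = (H 2 ^ 2) ^ 3 := by ring
            _ ≤ (p : ℝ) ^ 3 := by
              have : H 2 ^ 2 ≤ p := by nlinarith
              gcongr
        have hp30 : (0 : ℝ) < (p : ℝ) ^ 3 := by positivity
        have : t * (p : ℝ) ^ 3 ≤ (2 * M) * (p : ℝ) ^ 3 := by
          calc t * (p : ℝ) ^ 3 ≤ 2 * (M * P ^ 2) := hts2.le
            _ ≤ 2 * (M * p ^ 3) := by gcongr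
            _ = _ := by ring
        exact le_of_mul_le_mul_right this hp30
      have hc := triv Z2 (Finset.filter_subset _ _)
      calc (Z2.card : ℝ) * t ^ 2 ≤ (27 * P) ^ 2 * (2 * M) ^ 2 := by gcongr
        _ = (27 ^ 2 * 4) * M ^ 2 * P ^ 2 := by ring
        _ ≤ _ := by gcongr; norm_num
    · push Not at hts2
      set r : Fin 3 → ℝ := fun i => p / (36 * H i) with hr
      set h : Fin 3 → ℝ := fun i => 2 * r i with hh
      have hhv : ∀ i, h i = p / (18 * H i) := by
        intro i
        have := hHi i
        simp only [hh, hr]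
        field_simp; norm_num
      have hrpos : ∀ i, 0 ≤ r i := by
        intro i; have := hHi i; simp only [hr]; positivity
      have hHr : ∀ i, H i * r i ≤ p / 36 := by
        intro i; have := hHi i; simp only [hr]; apply le_of_eq; field_simp
      have hHh : ∀ i, H i * h i ≤ p / 18 := by
        intro i; have := hHr i; simp only [hh]; linarith
      have key : (Z2.card : ℝ) * ts ^ 2 ≤ 10 ^ 8 * (h 2 * (h 1 * h 0)) ^ 2 := by
        refine mainU h3 η hη c210 n3.symm n2.symm n1.symm h ?_ ?_ ?_ ?_ ?_ Z2 ts hts2 ?_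
        · rw [hhv, div_le_div_iff₀ (by norm_num) (by positivity)]
          nlinarith
        · rw [hhv, hhv]; gcongr
        · rw [hhv, hhv]; gcongr
        · rw [hhv]; gcongr; linarith
        · have e : (2 : ℝ) * H 2 ^ 2 ≤ p * H 0 ^ 2 := by
            have : (1 : ℝ) ≤ H 0 ^ 2 := one_le_pow₀ h0
            nlinarith
          rw [hhv, hhv, div_pow, div_pow, mul_div_assoc', mul_div_assoc',
            div_le_div_iff₀ (by positivity) (by positivity)]
          have : (0 : ℝ) ≤ p ^ 2 * 18 ^ 2 := by positivity
          nlinarith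
        · intro z hz
          obtain ⟨hz, hrk⟩ := Finset.mem_filter.1 hz
          have hrs := rank_sum ω η hpair z H h hHh
          refine ⟨(hZ z hz).1, by omega, ?_⟩
          have htr := transfer ω η hω hpair z H r hHr hHpi
          have hlow := le_card_bx r hrpos
          rw [prod_mab c012 n1 n2 n3] at hlow
          have hv : r 0 * (r 1 * r 2) = p ^ 3 / (36 ^ 3 * P) := by
            simp only [hr, hP]; field_simp
          rw [hv] at hlow
          rw [hcard] at htr
          push_cast at htr
          have h5 : ((p : ℝ) ^ 3 / (36 ^ 3 * P)) ^ 2 * t ≤ 4 * p ^ 3 * (LA η z h).card := by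
            refine le_trans ?_ htr
            have := (hZ z hz).2.2
            gcongr
          have h6 : ((p : ℝ) ^ 3 / (36 ^ 3 * P)) ^ 2 * t = (4 * p ^ 3) * ts := by
            rw [hts, hM]; field_simp
          rw [h6] at h5
          exact le_of_mul_le_mul_left h5 (by positivity)
      have hv : h 2 * (h 1 * h 0) = p ^ 3 / (18 ^ 3 * P) := by
        rw [hhv, hhv, hhv, hP]; field_simp
      rw [hv] at key
      have e1 : (Z2.card : ℝ) * t ^ 2 = (Z2.card * ts ^ 2) * (M ^ 2 * P ^ 4 / p ^ 6) := by
        rw [hts]; field_simp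
      have e2 : 10 ^ 8 * ((p : ℝ) ^ 3 / (18 ^ 3 * P)) ^ 2 * (M ^ 2 * P ^ 4 / p ^ 6) =
          10 ^ 8 / 18 ^ 6 * M ^ 2 * P ^ 2 := by
        field_simp
      calc (Z2.card : ℝ) * t ^ 2 = (Z2.card * ts ^ 2) * (M ^ 2 * P ^ 4 / p ^ 6) := e1
        _ ≤ 10 ^ 8 * ((p : ℝ) ^ 3 / (18 ^ 3 * P)) ^ 2 * (M ^ 2 * P ^ 4 / p ^ 6) := by gcongr
        _ = _ := e2
        _ ≤ _ := by gcongr; norm_num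
  rw [hsplit, add_mul]
  have : 0 < P ^ 2 := by positivity
  nlinarith

lemma layer {F : Type} (Zs : Finset F) (f : F → ℕ) (T : ℕ) (hT : ∀ z ∈ Zs, f z ≤ T) (Q : ℝ)
    (hQ : ∀ t : ℕ, 1 ≤ t → ((Zs.filter (fun z => t ≤ f z)).card : ℝ) * (t : ℝ) ^ 2 ≤ Q) :
    ((∑ z ∈ Zs, (f z) ^ 2 : ℕ) : ℝ) ≤ 2 * Q * (1 + Real.log T) := by
  have h1 : ∀ z ∈ Zs, ((f z : ℝ)) ^ 2 ≤ ∑ t ∈ Finset.Icc 1 T, if t ≤ f z then 2 * (t : ℝ) else 0 := by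
    intro z hz
    have e : ∀ n : ℕ, (n : ℝ) ^ 2 ≤ ∑ t ∈ Finset.Icc 1 n, 2 * (t : ℝ) := by
      intro n
      induction n with
      | zero => simp
      | succ n ih =>
        rw [Finset.sum_Icc_succ_top (by omega)]
        push_cast
        have : (0 : ℝ) ≤ n := by positivity
        nlinarith
    refine (e (f z)).trans (le_of_eq ?_)
    rw [← Finset.sum_filter]
    refine Finset.sum_congr ?_ fun _ _ => rfl
    ext t
    simp only [Finset.mem_filter, Finset.mem_Icc]
    have := hT z hz
    omega
  have hQ0 : 0 ≤ Q := le_trans (by positivity) (hQ 1 le_rfl)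
  push_cast
  calc ∑ z ∈ Zs, (f z : ℝ) ^ 2
      ≤ ∑ z ∈ Zs, ∑ t ∈ Finset.Icc 1 T, (if t ≤ f z then 2 * (t : ℝ) else 0) :=
        Finset.sum_le_sum h1
    _ = ∑ t ∈ Finset.Icc 1 T, ∑ z ∈ Zs, (if t ≤ f z then 2 * (t : ℝ) else 0) := Finset.sum_comm
    _ ≤ ∑ t ∈ Finset.Icc 1 T, 2 * Q * (t : ℝ)⁻¹ := by
        refine Finset.sum_le_sum fun t ht => ?_
        have ht1 := (Finset.mem_Icc.1 ht).1
        have ht0 : (0 : ℝ) < t := by exact_mod_cast ht1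
        rw [← Finset.sum_filter, Finset.sum_const, nsmul_eq_mul, ← div_eq_mul_inv,
          le_div_iff₀ ht0]
        have := hQ t ht1
        nlinarith
    _ = 2 * Q * (harmonic T : ℝ) := by
        rw [← Finset.mul_sum, harmonic_eq_sum_Icc]; push_cast; rfl
    _ ≤ _ := by
        gcongr
        exact harmonic_le_one_add_log T



/-- Lemma 1: the contribution `S₁` of the ratios `z ∈ Z \ F_p` satisfies
`S₁ ≪ |B|² log p`. -/
theorem stmt_6 :
    ∃ C : ℝ, 0 < C ∧
      ∀ (p : ℕ), p.Prime → 3 ≤ p →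
      ∀ (F : Type) [instField : Field F] [instFintype : Fintype F],
        Fintype.card F = p ^ 3 →
        ∀ (ω : Fin 3 → F),
          (∀ c : Fin 3 → ℤ, (∑ i, (c i : F) * ω i) = 0 → ∀ i, (p : ℤ) ∣ c i) →
          (∀ x : F, ∃ c : Fin 3 → ℤ, x = ∑ i, (c i : F) * ω i) →
        ∀ (H : Fin 3 → ℕ),
          (∀ i, 1 ≤ H i) →
          H 0 ≤ H 1 → H 1 ≤ H 2 →
          (H 2 : ℝ) < Real.sqrt ((p : ℝ) / 2) →
          let B₀ : Finset F :=
            (Finset.Icc (-(H 0 : ℤ)) (H 0 : ℤ) ×ˢ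
              Finset.Icc (-(H 1 : ℤ)) (H 1 : ℤ) ×ˢ
              Finset.Icc (-(H 2 : ℤ)) (H 2 : ℤ)).image
              (fun x => (x.1 : F) * ω 0 + (x.2.1 : F) * ω 1 + (x.2.2 : F) * ω 2)
          let f₀ : F → ℕ := fun z => ((B₀ ×ˢ B₀).filter (fun q => q.1 * z = q.2)).card
          ((∑ z ∈ Finset.univ.filter (fun z : F =>
              (∃ x ∈ B₀, ∃ y ∈ B₀, x ≠ 0 ∧ y ≠ 0 ∧ z = x * y⁻¹) ∧
                ¬ ∃ t : ℤ, z = (t : F)), (f₀ z) ^ 2 : ℕ) : ℝ) ≤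
            C * ((H 0 : ℝ) * (H 1 : ℝ) * (H 2 : ℝ)) ^ 2 * Real.log p := by
  refine ⟨2 * (10 ^ 9 * (4 * 36 ^ 6) ^ 2) * 7, by positivity, ?_⟩
  intro p hp hp3 F _ _ hcard ω hω _ H hH1 hH01 hH12 hHs B₀ f₀
  have : Fact p.Prime := ⟨hp⟩
  have hch : CharP F p := charP_of_card_eq_prime_pow hcard
  letI : Algebra (ZMod p) F := ZMod.algebra F p
  have h3 : Module.finrank (ZMod p) F = 3 := by
    have := Module.card_eq_pow_finrank (K := ZMod p) (V := F)
    rw [hcard, ZMod.card] at this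
    exact (Nat.pow_right_injective hp.two_le this).symm
  have hp0 : (0 : ℝ) < p := by exact_mod_cast hp.pos
  have hHp : 2 * (H 2 : ℝ) ^ 2 < p := by
    have := (Real.lt_sqrt (by positivity)).1 hHs
    linarith
  set Hr : Fin 3 → ℝ := fun i => (H i : ℝ) with hHr
  have hB : ∀ x ∈ B₀, ∃ c : Fin 3 → ℤ, (∀ i, |(c i : ℝ)| ≤ Hr i) ∧ ev ω c = x := by
    intro x hx
    obtain ⟨⟨a, b, c⟩, hy, rfl⟩ := Finset.mem_image.1 hx
    simp only [Finset.mem_product, Finset.mem_Icc] at hy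
    refine ⟨![a, b, c], ?_, ?_⟩
    · have key : ∀ (n : ℤ) (N : ℕ), -(N : ℤ) ≤ n → n ≤ N → |(n : ℝ)| ≤ N := by
        intro n N h1 h2
        rw [abs_le]
        exact ⟨by exact_mod_cast h1, by exact_mod_cast h2⟩
      intro i
      fin_cases i
      · exact key _ _ hy.1.1 hy.1.2
      · exact key _ _ hy.2.1.1 hy.2.1.2
      · exact key _ _ hy.2.2.1 hy.2.2.2
    · simp [ev, Fin.sum_univ_three]
  have hfLA : ∀ z, f₀ z ≤ (LA ω z Hr).card := by
    intro z
    have hsub : (B₀ ×ˢ B₀).filter (fun q => q.1 * z = q.2) ⊆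
        (LA ω z Hr).image (fun a => (ev ω a.1, ev ω a.2)) := by
      rintro ⟨x, y⟩ hq
      obtain ⟨hq, e⟩ := Finset.mem_filter.1 hq
      obtain ⟨hx, hy⟩ := Finset.mem_product.1 hq
      obtain ⟨c, hc, hcx⟩ := hB x hx
      obtain ⟨d, hd, hdy⟩ := hB y hy
      refine Finset.mem_image.2 ⟨(c, d), (mem_LA _ _ _ _).2 ⟨⟨hc, hd⟩, ?_⟩, ?_⟩
      · simp only [hcx, hdy]; exact e
      · simp only [hcx, hdy]
    exact (Finset.card_le_card hsub).trans Finset.card_image_le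
  set Zs := Finset.univ.filter (fun z : F =>
              (∃ x ∈ B₀, ∃ y ∈ B₀, x ≠ 0 ∧ y ≠ 0 ∧ z = x * y⁻¹) ∧
                ¬ ∃ t : ℤ, z = (t : F)) with hZs
  have hlay := layer Zs f₀ (p ^ 6) (fun z _ => by
      refine (Finset.card_le_univ _).trans ?_
      rw [Fintype.card_prod, hcard]
      apply le_of_eq; ring) (10 ^ 9 * (4 * 36 ^ 6) ^ 2 * (Hr 0 * (Hr 1 * Hr 2)) ^ 2) (by
      intro t ht
      refine weak h3 hcard hp3 ω hω Hr ?_ ?_ ?_ hHp _ t (by exact_mod_cast ht) ?_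
      · simp only [hHr]; exact_mod_cast hH1 0
      · simp only [hHr]; exact_mod_cast hH01
      · simp only [hHr]; exact_mod_cast hH12
      · intro z hz
        obtain ⟨hz, htz⟩ := Finset.mem_filter.1 hz
        obtain ⟨-, ⟨x, hx, y, hy, hx0, hy0, hzxy⟩, hzi⟩ := Finset.mem_filter.1 hz
        refine ⟨hzi, ?_, by exact_mod_cast htz.trans (hfLA z)⟩
        obtain ⟨c, hc, hcx⟩ := hB x hx
        obtain ⟨d, hd, hdy⟩ := hB y hy
        refine ⟨(d, c), (mem_LA _ _ _ _).2 ⟨⟨hd, hc⟩, ?_⟩, ?_⟩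
        · simp only [hcx, hdy, hzxy]; field_simp
        · intro h0
          have : c = 0 := congrArg Prod.snd h0
          apply hx0
          rw [← hcx, this, ev_zero])
  refine hlay.trans ?_
  have hlog : 1 ≤ Real.log p := by
    rw [Real.le_log_iff_exp_le hp0]
    have h1 := Real.exp_one_lt_d9
    have h2 : (3 : ℝ) ≤ p := by exact_mod_cast hp3
    linarith
  have hl6 : Real.log ((p ^ 6 : ℕ) : ℝ) = 6 * Real.log p := by
    push_cast; rw [Real.log_pow]; norm_num
  rw [hl6]
  have hle : 1 + 6 * Real.log p ≤ 7 * Real.log p := by linarith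
  calc 2 * (10 ^ 9 * (4 * 36 ^ 6) ^ 2 * (Hr 0 * (Hr 1 * Hr 2)) ^ 2) * (1 + 6 * Real.log p)
      ≤ 2 * (10 ^ 9 * (4 * 36 ^ 6) ^ 2 * (Hr 0 * (Hr 1 * Hr 2)) ^ 2) * (7 * Real.log p) := by
        gcongr
    _ = _ := by simp only [hHr]; ring
end

section
/- There is an absolute constant C > 0 such that for every prime p ≥ 3, every basis {ω₁, ω₂, ω₃} of F_{p³} over F_p, and all integers 1 ≤ H₁ ≤ H₂ ≤ H₃ < √(p/2), one has S₂ := Σ_{z ∈ Z ∩ F_p} f₀(z)² ≤ C·(H₁H₂H₃)²·(log p)³, where F_p denotes the prime subfield of F_{p³}. -/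
open scoped Classical

lemma aux_mult_card (H : ℕ) (d : ℤ) (hd : d ≠ 0) (hdH : |d| ≤ H) (S : Finset ℤ)
    (hS : ∀ x ∈ S, |x| ≤ H ∧ d ∣ x) : (S.card : ℝ) ≤ 3 * H / |(d : ℝ)| := by
  have hdpos : 0 < |d| := abs_pos.mpr hd
  have h1 : S ⊆ (Finset.Icc (-((H : ℤ) / |d|)) ((H : ℤ) / |d|)).image (fun k => |d| * k) := by
    intro x hx
    obtain ⟨hx1, hx2⟩ := hS x hx
    obtain ⟨k, rfl⟩ := (abs_dvd d x).mpr hx2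
    rw [Finset.mem_image]
    refine ⟨k, ?_, rfl⟩
    rw [abs_mul, abs_abs] at hx1
    have : |k| ≤ (H : ℤ) / |d| := by
      rw [Int.le_ediv_iff_mul_le hdpos]; linarith
    rw [Finset.mem_Icc]; exact abs_le.mp this
  have h2 : (S.card : ℤ) ≤ 2 * ((H : ℤ) / |d|) + 1 := by
    have := (Finset.card_le_card h1).trans Finset.card_image_le
    rw [Int.card_Icc] at this
    have h3 : 0 ≤ (H : ℤ) / |d| := by positivity
    omega
  have h3 : ((H : ℤ) / |d|) * |d| ≤ H := Int.ediv_mul_le _ hdpos.ne'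
  have h4 : (S.card : ℤ) * |d| ≤ 3 * H := by nlinarith
  have hd' : 0 < |(d : ℝ)| := by exact_mod_cast hdpos
  rw [le_div_iff₀ hd']
  exact_mod_cast h4

lemma aux_prim {F : Type} [Field F] (p : ℕ) [CharP F p] (H : ℕ)
    (hHp : 2 * H ^ 2 < p) (z : F) (a b : ℤ) (ha : |a| ≤ H) (hb : |b| ≤ H)
    (hab : (a : F) * z = b) (ha0 : (a : F) ≠ 0) (hb0 : (b : F) ≠ 0) :
    ∃ a' b' : ℤ, a' ≠ 0 ∧ b' ≠ 0 ∧ |a'| ≤ H ∧ |b'| ≤ H ∧ (a' : F) ≠ 0 ∧ (a' : F) * z = b' ∧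
      ∀ x y : ℤ, |x| ≤ H → |y| ≤ H → (x : F) * z = y → a' ∣ x ∧ b' ∣ y := by
  have ha1 : a ≠ 0 := by rintro rfl; simp at ha0
  have hb1 : b ≠ 0 := by rintro rfl; simp at hb0
  have hg : 0 < Int.gcd a b := Int.gcd_pos_of_ne_zero_left _ ha1
  obtain ⟨a', b', hcop, h1, h2⟩ := Int.exists_gcd_one hg
  set g : ℤ := (Int.gcd a b : ℤ) with hgdef
  have hg1 : (1 : ℤ) ≤ g := by omega
  have hgF : (g : F) ≠ 0 := by
    intro h; apply ha0; rw [h1]; push_cast; rw [h]; simp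
  have ha'F : (a' : F) ≠ 0 := by
    intro h; apply ha0; rw [h1]; push_cast; rw [h]; simp
  have key : (a' : F) * z = b' := by
    rw [h1, h2] at hab
    push_cast at hab
    apply mul_right_cancel₀ hgF
    linear_combination hab
  have hA : |a'| ≤ H := by
    have : |a| = |a'| * g := by conv_lhs => rw [h1, abs_mul, abs_of_pos (by omega : 0 < g)]
    nlinarith [abs_nonneg a']
  have hB : |b'| ≤ H := by
    have : |b| = |b'| * g := by conv_lhs => rw [h2, abs_mul, abs_of_pos (by omega : 0 < g)]
    nlinarith [abs_nonneg b']
  refine ⟨a', b', ?_, ?_, hA, hB, ha'F, key, ?_⟩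
  · rintro rfl; apply ha1; rw [h1]; simp
  · rintro rfl; apply hb1; rw [h2]; simp
  · intro x y hx hy hxy
    have hz : ((x * b' - a' * y : ℤ) : F) = 0 := by
      push_cast; rw [← key, ← hxy]; ring
    rw [CharP.intCast_eq_zero_iff F p] at hz
    have habs : |x * b' - a' * y| < p := by
      calc |x * b' - a' * y| ≤ |x * b'| + |a' * y| := abs_sub _ _
        _ = |x| * |b'| + |a'| * |y| := by rw [abs_mul, abs_mul]
        _ ≤ H * H + H * H := by gcongr
        _ < p := by have : (2 * H ^ 2 : ℤ) < p := by exact_mod_cast hHp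
                    linarith
    have h0 := Int.eq_zero_of_abs_lt_dvd hz habs
    have hc : IsCoprime a' b' := Int.isCoprime_iff_gcd_eq_one.mpr hcop
    constructor
    · exact hc.dvd_of_dvd_mul_right ⟨y, by linarith⟩
    · exact hc.symm.dvd_of_dvd_mul_left ⟨x, by linarith⟩

lemma aux_sum {F : Type} (T : Finset F) (H : ℕ) (A B : F → ℤ)
    (hA0 : ∀ z ∈ T, A z ≠ 0) (hB0 : ∀ z ∈ T, B z ≠ 0)
    (hA : ∀ z ∈ T, |A z| ≤ H) (hB : ∀ z ∈ T, |B z| ≤ H)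
    (hinj : ∀ z ∈ T, ∀ w ∈ T, A z = A w → B z = B w → z = w) :
    ∑ z ∈ T, |(A z : ℝ)|⁻¹ * |(B z : ℝ)|⁻¹ ≤ 4 * (1 + Real.log H) ^ 2 := by
  let φ : F → (ℕ × ℕ) × (Bool × Bool) := fun z =>
    (((A z).natAbs, (B z).natAbs), (decide (0 < A z), decide (0 < B z)))
  have hφ : Set.InjOn φ T := by
    intro z hz w hw h
    simp only [φ, Prod.mk.injEq, decide_eq_decide] at h
    have := hA0 z hz; have := hA0 w hw; have := hB0 z hz; have := hB0 w hw
    apply hinj z hz w hw <;> omega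
  let ψ : (ℕ × ℕ) × (Bool × Bool) → ℝ := fun q => (q.1.1 : ℝ)⁻¹ * (q.1.2 : ℝ)⁻¹
  have e1 : ∑ z ∈ T, |(A z : ℝ)|⁻¹ * |(B z : ℝ)|⁻¹ = ∑ q ∈ T.image φ, ψ q := by
    rw [Finset.sum_image hφ]
    apply Finset.sum_congr rfl
    intro z _
    simp [ψ, φ, Nat.cast_natAbs]
  have e2 : T.image φ ⊆ (Finset.Icc 1 H ×ˢ Finset.Icc 1 H) ×ˢ Finset.univ := by
    intro q hq
    obtain ⟨z, hz, rfl⟩ := Finset.mem_image.mp hq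
    have := hA0 z hz; have := hB0 z hz; have := abs_le.mp (hA z hz); have := abs_le.mp (hB z hz)
    simp only [φ, Finset.mem_product, Finset.mem_Icc, Finset.mem_univ, and_true]
    omega
  rw [e1]
  refine (Finset.sum_le_sum_of_subset_of_nonneg e2 (fun q _ _ => by positivity)).trans ?_
  have h := harmonic_le_one_add_log H
  rw [harmonic_eq_sum_Icc] at h
  push_cast at h
  rw [Finset.sum_product]
  simp only [ψ, Finset.sum_const, Finset.card_univ, Fintype.card_prod, Fintype.card_bool]
  rw [Finset.sum_product]
  simp only [nsmul_eq_mul, ← Finset.mul_sum, ← Finset.sum_mul]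
  have h0 : (0 : ℝ) ≤ ∑ i ∈ Finset.Icc 1 H, (i : ℝ)⁻¹ := by positivity
  push_cast
  nlinarith

lemma aux_box {F : Type} [Field F] (w : Fin 3 → F) (H : Fin 3 → ℕ) (hH : ∀ i, 1 ≤ H i)
    (d : ℤ) (hd : d ≠ 0) (hdH : |d| ≤ H 2) (S : Finset F)
    (hS : ∀ x ∈ S, ∃ u v t : ℤ, |u| ≤ H 0 ∧ |v| ≤ H 1 ∧ |t| ≤ H 2 ∧ d ∣ t ∧
      x = (u : F) * w 0 + (v : F) * w 1 + (t : F) * w 2) :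
    (S.card : ℝ) ≤ 27 * ((H 0 : ℝ) * H 1 * H 2) * |(d : ℝ)|⁻¹ := by
  let D : Finset ℤ := (Finset.Icc (-(H 2 : ℤ)) (H 2 : ℤ)).filter (fun t => d ∣ t)
  have h1 : S ⊆ (Finset.Icc (-(H 0 : ℤ)) (H 0 : ℤ) ×ˢ Finset.Icc (-(H 1 : ℤ)) (H 1 : ℤ) ×ˢ D).image
      (fun x => (x.1 : F) * w 0 + (x.2.1 : F) * w 1 + (x.2.2 : F) * w 2) := by
    intro x hx
    obtain ⟨u, v, t, hu, hv, ht, hdt, rfl⟩ := hS x hx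
    refine Finset.mem_image.mpr ⟨(u, v, t), ?_, rfl⟩
    simp only [D, Finset.mem_product, Finset.mem_Icc, Finset.mem_filter]
    exact ⟨abs_le.mp hu, abs_le.mp hv, abs_le.mp ht, hdt⟩
  have h2 := (Finset.card_le_card h1).trans Finset.card_image_le
  rw [Finset.card_product, Finset.card_product, Int.card_Icc, Int.card_Icc] at h2
  have hD := aux_mult_card (H 2) d hd hdH D (by
    intro x hx
    simp only [D, Finset.mem_Icc, Finset.mem_filter] at hx
    exact ⟨abs_le.mpr hx.1, hx.2⟩)
  have hb : ∀ i, (((H i : ℤ) + 1 - -(H i : ℤ)).toNat : ℝ) ≤ 3 * H i := by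
    intro i
    have := hH i
    have : ((H i : ℤ) + 1 - -(H i : ℤ)).toNat ≤ 3 * H i := by omega
    exact_mod_cast this
  calc (S.card : ℝ) ≤ _ := Nat.cast_le.mpr h2
    _ ≤ (3 * H 0) * ((3 * H 1) * (3 * H 2 / |(d : ℝ)|)) := by
      push_cast only [Nat.cast_mul]
      gcongr
      · exact hb 0
      · exact hb 1
    _ = _ := by ring



/-- Lemma 2: the contribution `S₂` of the ratios `z ∈ Z ∩ F_p` satisfies
`S₂ ≪ |B|² (log p)³`. -/
theorem stmt_7 :
    ∃ C : ℝ, 0 < C ∧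
      ∀ (p : ℕ), p.Prime → 3 ≤ p →
      ∀ (F : Type) [instField : Field F] [instFintype : Fintype F],
        Fintype.card F = p ^ 3 →
        ∀ (ω : Fin 3 → F),
          (∀ c : Fin 3 → ℤ, (∑ i, (c i : F) * ω i) = 0 → ∀ i, (p : ℤ) ∣ c i) →
          (∀ x : F, ∃ c : Fin 3 → ℤ, x = ∑ i, (c i : F) * ω i) →
        ∀ (H : Fin 3 → ℕ),
          (∀ i, 1 ≤ H i) →
          H 0 ≤ H 1 → H 1 ≤ H 2 →
          (H 2 : ℝ) < Real.sqrt ((p : ℝ) / 2) →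
          let B₀ : Finset F :=
            (Finset.Icc (-(H 0 : ℤ)) (H 0 : ℤ) ×ˢ
              Finset.Icc (-(H 1 : ℤ)) (H 1 : ℤ) ×ˢ
              Finset.Icc (-(H 2 : ℤ)) (H 2 : ℤ)).image
              (fun x => (x.1 : F) * ω 0 + (x.2.1 : F) * ω 1 + (x.2.2 : F) * ω 2)
          let f₀ : F → ℕ := fun z => ((B₀ ×ˢ B₀).filter (fun q => q.1 * z = q.2)).card
          ((∑ z ∈ Finset.univ.filter (fun z : F =>
              (∃ x ∈ B₀, ∃ y ∈ B₀, x ≠ 0 ∧ y ≠ 0 ∧ z = x * y⁻¹) ∧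
                ∃ t : ℤ, z = (t : F)), (f₀ z) ^ 2 : ℕ) : ℝ) ≤
            C * ((H 0 : ℝ) * (H 1 : ℝ) * (H 2 : ℝ)) ^ 2 * Real.log p ^ 3 := by

  refine ⟨11664, by norm_num, ?_⟩
  intro p hp hp3 F instField instFintype hcard w hind _ H hH h01 h12 hHp B₀ f₀
  haveI : Fact p.Prime := ⟨hp⟩
  haveI : CharP F p := charP_of_card_eq_prime_pow hcard
  have hHp' : 2 * (H 2) ^ 2 < p := by
    have h := (Real.lt_sqrt (by positivity)).mp hHp
    have : (2 * (H 2 : ℝ) ^ 2) < p := by linarith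
    exact_mod_cast this
  have hmem : ∀ x ∈ B₀, ∃ u v t : ℤ, |u| ≤ H 0 ∧ |v| ≤ H 1 ∧ |t| ≤ H 2 ∧
      x = (u : F) * w 0 + (v : F) * w 1 + (t : F) * w 2 := by
    intro x hx
    obtain ⟨⟨u, v, t⟩, hq, rfl⟩ := Finset.mem_image.mp hx
    simp only [Finset.mem_product, Finset.mem_Icc] at hq
    exact ⟨u, v, t, abs_le.mpr hq.1, abs_le.mpr hq.2.1, abs_le.mpr hq.2.2, rfl⟩
  have hcoord : ∀ (u v t u' v' t' τ : ℤ),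
      ((u : F) * w 0 + (v : F) * w 1 + (t : F) * w 2) * (τ : F) =
        (u' : F) * w 0 + (v' : F) * w 1 + (t' : F) * w 2 →
      (u : F) * τ = u' ∧ (v : F) * τ = v' ∧ (t : F) * τ = t' := by
    intro u v t u' v' t' τ h
    have h3 := hind ![u * τ - u', v * τ - v', t * τ - t'] (by
      simp [Fin.sum_univ_three]
      linear_combination h)
    have e : ∀ c : ℤ, (p : ℤ) ∣ c → (c : F) = 0 :=
      fun c hc => (CharP.intCast_eq_zero_iff F p c).mpr hc
    have e0 := e _ (h3 0)
    have e1 := e _ (h3 1)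
    have e2 := e _ (h3 2)
    simp at e0 e1 e2
    exact ⟨sub_eq_zero.mp e0, sub_eq_zero.mp e1, sub_eq_zero.mp e2⟩
  set T := Finset.univ.filter (fun z : F =>
              (∃ x ∈ B₀, ∃ y ∈ B₀, x ≠ 0 ∧ y ≠ 0 ∧ z = x * y⁻¹) ∧
                ∃ t : ℤ, z = (t : F)) with hT
  have hprim : ∀ z ∈ T, ∃ a' b' : ℤ, a' ≠ 0 ∧ b' ≠ 0 ∧ |a'| ≤ H 2 ∧ |b'| ≤ H 2 ∧
      (a' : F) ≠ 0 ∧ (a' : F) * z = b' ∧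
      ∀ x y : ℤ, |x| ≤ H 2 → |y| ≤ H 2 → (x : F) * z = y → a' ∣ x ∧ b' ∣ y := by
    intro z hz
    obtain ⟨⟨x, hx, y, hy, hx0, hy0, hzxy⟩, τ, hτ⟩ := (Finset.mem_filter.mp hz).2
    have hz0 : z ≠ 0 := by rw [hzxy]; exact mul_ne_zero hx0 (inv_ne_zero hy0)
    have hyz : y * z = x := by rw [hzxy]; field_simp
    obtain ⟨u, v, t, hu, hv, ht, rfl⟩ := hmem y hy
    obtain ⟨u', v', t', hu', hv', ht', rfl⟩ := hmem x hx
    rw [hτ] at hyz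
    obtain ⟨e0, e1, e2⟩ := hcoord _ _ _ _ _ _ _ hyz
    rw [← hτ] at e0 e1 e2
    have fin : ∀ a b : ℤ, |a| ≤ H 2 → |b| ≤ H 2 → (a : F) * z = b → (a : F) ≠ 0 → _ :=
      fun a b ha hb hab ha0 => aux_prim p (H 2) hHp' z a b ha hb hab ha0
        (by rw [← hab]; exact mul_ne_zero ha0 hz0)
    by_cases c0 : (u : F) = 0
    · by_cases c1 : (v : F) = 0
      · by_cases c2 : (t : F) = 0
        · exact absurd (by rw [c0, c1, c2]; ring) hy0
        · exact fin t t' ht ht' e2 c2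
      · exact fin v v' (by omega) (by omega) e1 c1
    · exact fin u u' (by omega) (by omega) e0 c0
  choose! A B hA0 hB0 hA hB hAF hAB hdiv using hprim
  have hsum := aux_sum T (H 2) A B hA0 hB0 hA hB (by
    intro z hz y hy h1 h2
    have e1 := hAB z hz
    have e2 := hAB y hy
    rw [h2, ← e2, ← h1] at e1
    exact mul_left_cancel₀ (hAF z hz) e1)
  set V : ℝ := (H 0 : ℝ) * (H 1 : ℝ) * (H 2 : ℝ) with hV
  have hpt : ∀ z ∈ T, ((f₀ z : ℝ)) ^ 2 ≤ 729 * V ^ 2 * (|(A z : ℝ)|⁻¹ * |(B z : ℝ)|⁻¹) := by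
    intro z hz
    obtain ⟨⟨x, hx, y, hy, hx0, hy0, hzxy⟩, τ, hτ⟩ := (Finset.mem_filter.mp hz).2
    have hz0 : z ≠ 0 := by rw [hzxy]; exact mul_ne_zero hx0 (inv_ne_zero hy0)
    set P := (B₀ ×ˢ B₀).filter (fun q => q.1 * z = q.2) with hP
    have hPc : ∀ q ∈ P, ∃ u v t u' v' t' : ℤ, |u| ≤ H 0 ∧ |v| ≤ H 1 ∧ |t| ≤ H 2 ∧
        |u'| ≤ H 0 ∧ |v'| ≤ H 1 ∧ |t'| ≤ H 2 ∧ A z ∣ t ∧ B z ∣ t' ∧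
        q.1 = (u : F) * w 0 + (v : F) * w 1 + (t : F) * w 2 ∧
        q.2 = (u' : F) * w 0 + (v' : F) * w 1 + (t' : F) * w 2 := by
      intro q hq
      obtain ⟨hq1, hq2⟩ := Finset.mem_filter.mp hq
      obtain ⟨hq3, hq4⟩ := Finset.mem_product.mp hq1
      obtain ⟨u, v, t, hu, hv, ht, e⟩ := hmem q.1 hq3
      obtain ⟨u', v', t', hu', hv', ht', e'⟩ := hmem q.2 hq4
      rw [e, e', hτ] at hq2
      obtain ⟨-, -, e2⟩ := hcoord _ _ _ _ _ _ _ hq2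
      rw [← hτ] at e2
      obtain ⟨d1, d2⟩ := hdiv z hz t t' ht ht' e2
      exact ⟨u, v, t, u', v', t', hu, hv, ht, hu', hv', ht', d1, d2, e, e'⟩
    have b1 : (P.card : ℝ) ≤ 27 * V * |(A z : ℝ)|⁻¹ := by
      have hi : Set.InjOn Prod.fst (P : Set (F × F)) := by
        intro q hq r hr h
        have h1 := (Finset.mem_filter.mp hq).2
        have h2 := (Finset.mem_filter.mp hr).2
        exact Prod.ext h (by rw [← h1, ← h2, h])
      rw [← Finset.card_image_of_injOn hi]
      refine aux_box w H hH (A z) (hA0 z hz) (hA z hz) _ ?_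
      intro x hx
      obtain ⟨q, hq, rfl⟩ := Finset.mem_image.mp hx
      obtain ⟨u, v, t, u', v', t', hu, hv, ht, hu', hv', ht', d1, d2, e, e'⟩ := hPc q hq
      exact ⟨u, v, t, hu, hv, ht, d1, e⟩
    have b2 : (P.card : ℝ) ≤ 27 * V * |(B z : ℝ)|⁻¹ := by
      have hi : Set.InjOn Prod.snd (P : Set (F × F)) := by
        intro q hq r hr h
        have h1 := (Finset.mem_filter.mp hq).2
        have h2 := (Finset.mem_filter.mp hr).2
        exact Prod.ext (mul_right_cancel₀ hz0 (by rw [h1, h2, h])) h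
      rw [← Finset.card_image_of_injOn hi]
      refine aux_box w H hH (B z) (hB0 z hz) (hB z hz) _ ?_
      intro x hx
      obtain ⟨q, hq, rfl⟩ := Finset.mem_image.mp hx
      obtain ⟨u, v, t, u', v', t', hu, hv, ht, hu', hv', ht', d1, d2, e, e'⟩ := hPc q hq
      exact ⟨u', v', t', hu', hv', ht', d2, e'⟩
    calc ((f₀ z : ℝ)) ^ 2 = (P.card : ℝ) * (P.card : ℝ) := by rw [sq]
      _ ≤ (27 * V * |(A z : ℝ)|⁻¹) * (27 * V * |(B z : ℝ)|⁻¹) := by gcongr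
      _ = _ := by ring
  have hlogp : 1 ≤ Real.log p := by
    rw [Real.le_log_iff_exp_le (by positivity)]
    have : (3 : ℝ) ≤ p := by exact_mod_cast hp3
    linarith [Real.exp_one_lt_d9]
  have hH2 : (1 : ℝ) ≤ H 2 := by exact_mod_cast hH 2
  have hlogH : Real.log (H 2) ≤ Real.log p := by
    apply Real.log_le_log (by linarith)
    have : H 2 ≤ p := by have := hH 2; nlinarith
    exact_mod_cast this
  have hlogH0 : 0 ≤ Real.log (H 2) := Real.log_nonneg hH2
  push_cast
  calc ∑ z ∈ T, (f₀ z : ℝ) ^ 2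
      ≤ ∑ z ∈ T, 729 * V ^ 2 * (|(A z : ℝ)|⁻¹ * |(B z : ℝ)|⁻¹) := Finset.sum_le_sum hpt
    _ = 729 * V ^ 2 * ∑ z ∈ T, (|(A z : ℝ)|⁻¹ * |(B z : ℝ)|⁻¹) := by rw [Finset.mul_sum]
    _ ≤ 729 * V ^ 2 * (4 * (1 + Real.log (H 2)) ^ 2) := by gcongr
    _ ≤ 729 * V ^ 2 * (4 * (2 * Real.log p) ^ 2) := by gcongr; linarith
    _ = 11664 * V ^ 2 * (Real.log p ^ 2 * 1) := by ring
    _ ≤ 11664 * V ^ 2 * (Real.log p ^ 2 * Real.log p) := by gcongr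
    _ = _ := by ring
end

section
/- Let p be a prime, {ω₁, ω₂, ω₃} a basis of F_{p³} over F_p, and B a box with 1 ≤ Hᵢ < √(p/2) for i = 1, 2, 3. Then the multiplicative energy satisfies E(B) ≤ 3·|B|² + Σ_{z ∈ Z} f₀(z)². -/
open scoped Classical

theorem abstract_energy {F : Type} [Field F] [Fintype F] (B B₀ : Finset F) (M : ℕ)
    (hM : 1 ≤ M) (hB : B.card ≤ M) (hB₀ : 2 * M ≤ B₀.card)
    (hsub : ∀ x ∈ B, ∀ y ∈ B, x - y ∈ B₀) :
    ((B ×ˢ B ×ˢ B ×ˢ B).filter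
        (fun q => q.1 * q.2.1 = q.2.2.1 * q.2.2.2)).card ≤
      3 * M ^ 2 +
        ∑ z ∈ Finset.univ.filter (fun z : F =>
          ∃ x ∈ B₀, ∃ y ∈ B₀, x ≠ 0 ∧ y ≠ 0 ∧ z = x * y⁻¹),
          (((B₀ ×ˢ B₀).filter (fun q => q.1 * z = q.2)).card) ^ 2 := by
  set Z := Finset.univ.filter (fun z : F =>
          ∃ x ∈ B₀, ∃ y ∈ B₀, x ≠ 0 ∧ y ≠ 0 ∧ z = x * y⁻¹) with hZ
  set f : F → ℕ := fun z => ((B₀ ×ˢ B₀).filter (fun q => q.1 * z = q.2)).card with hf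
  let G : F → Finset (F × F) := fun z =>
    (B ×ˢ B).filter (fun q => q.1 ≠ 0 ∧ q.2 ≠ 0 ∧ q.1 * z = q.2)
  set E := (B ×ˢ B ×ˢ B ×ˢ B).filter
        (fun q => q.1 * q.2.1 = q.2.2.1 * q.2.2.2) with hE
  have hBB : (B ×ˢ B).card ≤ M ^ 2 := by
    rw [Finset.card_product, sq]; exact Nat.mul_le_mul hB hB
  -- zero part
  let S1 := E.filter (fun q => q.1 ≠ 0 ∧ q.2.1 ≠ 0 ∧ q.2.2.1 ≠ 0 ∧ q.2.2.2 ≠ 0)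
  have hcov : E ⊆ ((((B ×ˢ B).image (fun r => ((0:F), r.1, (0:F), r.2))) ∪
      ((B ×ˢ B).image (fun r => ((0:F), r.1, r.2, (0:F))))) ∪
      (((B ×ˢ B).image (fun r => (r.1, (0:F), (0:F), r.2))) ∪
      ((B ×ˢ B).image (fun r => (r.1, (0:F), r.2, (0:F)))))) ∪ S1 := by
    rintro ⟨x, y, w, t⟩ hq
    have hq' := hq
    simp only [hE, Finset.mem_filter, Finset.mem_product] at hq'
    obtain ⟨⟨hx, hy, hw, ht⟩, h⟩ := hq'
    simp only [S1, Finset.mem_union, Finset.mem_filter, Finset.mem_image, Finset.mem_product,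
      Prod.exists, Prod.mk.injEq]
    by_cases h0 : x * y = 0
    · have h1 : w * t = 0 := h ▸ h0
      left
      rcases mul_eq_zero.1 h0 with rfl | rfl <;> rcases mul_eq_zero.1 h1 with rfl | rfl
      · left; left; exact ⟨y, t, ⟨hy, ht⟩, rfl, rfl, rfl, rfl⟩
      · left; right; exact ⟨y, w, ⟨hy, hw⟩, rfl, rfl, rfl, rfl⟩
      · right; left; exact ⟨x, t, ⟨hx, ht⟩, rfl, rfl, rfl, rfl⟩
      · right; right; exact ⟨x, w, ⟨hx, hw⟩, rfl, rfl, rfl, rfl⟩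
    · have h1 : w * t ≠ 0 := fun h' => h0 (h.trans h')
      right
      exact ⟨hq, left_ne_zero_of_mul h0, right_ne_zero_of_mul h0, left_ne_zero_of_mul h1,
        right_ne_zero_of_mul h1⟩
  have hcard : E.card ≤ 4 * M ^ 2 + S1.card := by
    refine (Finset.card_le_card hcov).trans ?_
    refine (Finset.card_union_le _ _).trans ?_
    have c1 := (Finset.card_image_le (s := B ×ˢ B) (f := fun r => ((0:F), r.1, (0:F), r.2))).trans hBB
    have c2 := (Finset.card_image_le (s := B ×ˢ B) (f := fun r => ((0:F), r.1, r.2, (0:F)))).trans hBB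
    have c3 := (Finset.card_image_le (s := B ×ˢ B) (f := fun r => (r.1, (0:F), (0:F), r.2))).trans hBB
    have c4 := (Finset.card_image_le (s := B ×ˢ B) (f := fun r => (r.1, (0:F), r.2, (0:F)))).trans hBB
    have u1 := Finset.card_union_le ((B ×ˢ B).image (fun r => ((0:F), r.1, (0:F), r.2)))
      ((B ×ˢ B).image (fun r => ((0:F), r.1, r.2, (0:F))))
    have u2 := Finset.card_union_le ((B ×ˢ B).image (fun r => (r.1, (0:F), (0:F), r.2)))
      ((B ×ˢ B).image (fun r => (r.1, (0:F), r.2, (0:F))))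
    refine Nat.add_le_add_right ((Finset.card_union_le _ _).trans ?_) _
    linarith
  have hS1 : S1.card ≤ ∑ z : F, (G z).card ^ 2 := by
    rw [Finset.card_eq_sum_card_fiberwise (f := fun q => q.1 * q.2.2.1⁻¹) (t := Finset.univ)
      (fun _ _ => by simp)]
    refine Finset.sum_le_sum fun z _ => ?_
    rw [sq, ← Finset.card_product]
    refine Finset.card_le_card_of_injOn (fun q => ((q.2.2.1, q.1), (q.2.1, q.2.2.2))) ?_ ?_
    · rintro ⟨x, y, w, t⟩ hq
      simp only [S1, hE, Finset.coe_filter, Finset.mem_filter, Finset.mem_product,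
        Set.mem_setOf_eq] at hq
      obtain ⟨⟨⟨⟨hx, hy, hw, ht⟩, h⟩, hx0, hy0, hw0, ht0⟩, rfl⟩ := hq
      simp only [G, Finset.coe_product, Set.mem_prod, Finset.mem_coe, Finset.mem_filter,
        Finset.mem_product]
      refine ⟨⟨⟨hw, hx⟩, hw0, hx0, ?_⟩, ⟨hy, ht⟩, hy0, ht0, ?_⟩
      · field_simp
      · field_simp
        linear_combination h
    · rintro ⟨x, y, w, t⟩ _ ⟨x', y', w', t'⟩ _ h
      simp only [Prod.mk.injEq] at h ⊢
      tauto
  -- outside Z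
  have hout : ∀ z, z ∉ Z → (G z).card ≤ 1 := by
    intro z hz
    rw [Finset.card_le_one]
    rintro ⟨a, b⟩ h1 ⟨c, d⟩ h2
    simp only [G, Finset.mem_filter, Finset.mem_product] at h1 h2
    obtain ⟨⟨ha, hb⟩, ha0, hb0, h1⟩ := h1
    obtain ⟨⟨hc, hd⟩, hc0, hd0, h2⟩ := h2
    have hz0 : z ≠ 0 := by rintro rfl; exact hb0 (by rw [← h1]; simp)
    have hac : a = c := by
      by_contra hne
      apply hz
      have hac0 : a - c ≠ 0 := sub_ne_zero.2 hne
      have hrel : (a - c) * z = b - d := by rw [sub_mul, h1, h2]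
      simp only [hZ, Finset.mem_filter, Finset.mem_univ, true_and]
      refine ⟨b - d, hsub _ hb _ hd, a - c, hsub _ ha _ hc, ?_, hac0, ?_⟩
      · rw [← hrel]; exact mul_ne_zero hac0 hz0
      · rw [← hrel]; field_simp
    subst hac
    rw [← h1, ← h2]
  have hin : ∀ z, (G z).card ≤ f z := by
    intro z
    rcases (G z).eq_empty_or_nonempty with h | ⟨⟨c, d⟩, h2⟩
    · simp [h]
    · simp only [G, Finset.mem_filter, Finset.mem_product] at h2
      obtain ⟨⟨hc, hd⟩, hc0, hd0, h2⟩ := h2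
      refine Finset.card_le_card_of_injOn (fun q => (q.1 - c, q.2 - d)) ?_ ?_
      · rintro ⟨a, b⟩ h1
        simp only [G, Finset.mem_coe, Finset.mem_filter, Finset.mem_product] at h1 ⊢
        obtain ⟨⟨ha, hb⟩, ha0, hb0, h1⟩ := h1
        exact ⟨⟨hsub _ ha _ hc, hsub _ hb _ hd⟩, by rw [sub_mul, h1, h2]⟩
      · rintro ⟨a, b⟩ _ ⟨a', b'⟩ _ h
        simpa using h
  have hsumG : ∑ z : F, (G z).card ≤ M ^ 2 := by
    refine le_trans ?_ hBB
    rw [← Finset.card_biUnion]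
    · apply Finset.card_le_card
      intro q hq
      simp only [G, Finset.mem_biUnion, Finset.mem_filter] at hq
      obtain ⟨_, _, h, _⟩ := hq
      exact h
    · intro z _ z' _ hne
      rw [Function.onFun, Finset.disjoint_left]
      intro q h1 h2
      simp only [G, Finset.mem_filter] at h1 h2
      exact hne (mul_left_cancel₀ h1.2.1 (h1.2.2.2.trans h2.2.2.2.symm))
  have h1Z : (1 : F) ∈ Z := by
    obtain ⟨v, hv, hv0⟩ := Finset.exists_mem_ne (s := B₀) (by omega) 0
    simp only [hZ, Finset.mem_filter, Finset.mem_univ, true_and]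
    exact ⟨v, hv, v, hv, hv0, hv0, by field_simp⟩
  have hG1 : (G 1).card ≤ M := by
    refine le_trans (Finset.card_le_card_of_injOn Prod.fst ?_ ?_) hB
    · rintro ⟨a, b⟩ h1
      simp only [G, Finset.mem_coe, Finset.mem_filter, Finset.mem_product] at h1 ⊢
      exact h1.1.1
    · rintro ⟨a, b⟩ h1 ⟨a', b'⟩ h2 h
      simp only [G, Finset.mem_coe, Finset.mem_filter, Finset.mem_product, mul_one] at h1 h2 h
      rw [← h1.2.2.2, ← h2.2.2.2, h]
  have hf1 : 2 * M ≤ f 1 := by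
    refine hB₀.trans (Finset.card_le_card_of_injOn (fun x => (x, x)) ?_ ?_)
    · intro x hx
      simpa using hx
    · intro x _ y _ h
      simpa using h
  have hsplit : ∑ z : F, (G z).card ^ 2 ≤ ∑ z ∈ Z, (G z).card ^ 2 + M ^ 2 := by
    rw [← Finset.sum_add_sum_compl Z]
    refine Nat.add_le_add_left ?_ _
    refine le_trans ?_ hsumG
    refine le_trans (Finset.sum_le_sum (g := fun z => (G z).card) fun z hz => ?_)
      (Finset.sum_le_sum_of_subset (Finset.subset_univ _))
    have := hout z (by simpa using hz)
    show (G z).card ^ 2 ≤ (G z).card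
    nlinarith
  have hZs : ∑ z ∈ Z, (G z).card ^ 2 + 3 * M ^ 2 ≤ ∑ z ∈ Z, f z ^ 2 := by
    rw [← Finset.add_sum_erase _ _ h1Z, ← Finset.add_sum_erase _ _ h1Z]
    have : ∑ z ∈ Z.erase 1, (G z).card ^ 2 ≤ ∑ z ∈ Z.erase 1, f z ^ 2 :=
      Finset.sum_le_sum fun z _ => Nat.pow_le_pow_left (hin z) 2
    have a1 := Nat.pow_le_pow_left hG1 2
    have a2 := Nat.pow_le_pow_left hf1 2
    rw [mul_pow] at a2
    linarith
  have hM2 : 0 ≤ M ^ 2 := Nat.zero_le _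
  linarith

/-- The basic energy estimate: `E(B) ≤ 3|B|² + Σ_{z ∈ Z} f₀(z)²`. -/
theorem stmt_8 (p : ℕ) (hp : p.Prime)
    (F : Type) [instField : Field F] [instFintype : Fintype F]
    (hcard : Fintype.card F = p ^ 3)
    (ω : Fin 3 → F)
    (hli : ∀ c : Fin 3 → ℤ, (∑ i, (c i : F) * ω i) = 0 → ∀ i, (p : ℤ) ∣ c i)
    (hspan : ∀ x : F, ∃ c : Fin 3 → ℤ, x = ∑ i, (c i : F) * ω i)
    (N : Fin 3 → ℤ) (H : Fin 3 → ℕ)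
    (hH1 : ∀ i, 1 ≤ H i)
    (hHlt : ∀ i, (H i : ℝ) < Real.sqrt ((p : ℝ) / 2)) :
    let B : Finset F :=
      (Finset.Icc (N 0 + 1) (N 0 + (H 0 : ℤ)) ×ˢ
        Finset.Icc (N 1 + 1) (N 1 + (H 1 : ℤ)) ×ˢ
        Finset.Icc (N 2 + 1) (N 2 + (H 2 : ℤ))).image
        (fun x => (x.1 : F) * ω 0 + (x.2.1 : F) * ω 1 + (x.2.2 : F) * ω 2)
    let B₀ : Finset F :=
      (Finset.Icc (-(H 0 : ℤ)) (H 0 : ℤ) ×ˢ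
        Finset.Icc (-(H 1 : ℤ)) (H 1 : ℤ) ×ˢ
        Finset.Icc (-(H 2 : ℤ)) (H 2 : ℤ)).image
        (fun x => (x.1 : F) * ω 0 + (x.2.1 : F) * ω 1 + (x.2.2 : F) * ω 2)
    let f₀ : F → ℕ := fun z => ((B₀ ×ˢ B₀).filter (fun q => q.1 * z = q.2)).card
    ((B ×ˢ B ×ˢ B ×ˢ B).filter
        (fun q => q.1 * q.2.1 = q.2.2.1 * q.2.2.2)).card ≤
      3 * (H 0 * H 1 * H 2) ^ 2 +
        ∑ z ∈ Finset.univ.filter (fun z : F =>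
          ∃ x ∈ B₀, ∃ y ∈ B₀, x ≠ 0 ∧ y ≠ 0 ∧ z = x * y⁻¹), (f₀ z) ^ 2 := by
  intro B B₀ f₀
  have hp2 : 2 ≤ p := hp.two_le
  have h2H : ∀ i, 2 * H i < p := by
    intro i
    have h := hHlt i
    have hp0 : (2:ℝ) ≤ p := by exact_mod_cast hp2
    have h2 : (H i : ℝ) ^ 2 < p / 2 := (Real.lt_sqrt (by positivity)).1 h
    have : (2 * (H i : ℝ)) < p := by
      by_contra hc
      push Not at hc
      nlinarith
    exact_mod_cast this
  refine abstract_energy B B₀ (H 0 * H 1 * H 2) ?_ ?_ ?_ ?_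
  · exact Nat.mul_pos (Nat.mul_pos (hH1 0) (hH1 1)) (hH1 2)
  · refine Finset.card_image_le.trans ?_
    simp [Finset.card_product, mul_assoc]
  · have : B₀.card = (2 * H 0 + 1) * ((2 * H 1 + 1) * (2 * H 2 + 1)) := by
      rw [Finset.card_image_of_injOn]
      · simp only [Finset.card_product, Int.card_Icc]
        congr 1
        · omega
        · congr 1 <;> omega
      · rintro ⟨a, b, c⟩ h1 ⟨a', b', c'⟩ h2 h
        simp only [Finset.coe_product, Set.mem_prod, Finset.coe_Icc, Set.mem_Icc] at h1 h2
        simp only at h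
        have key := hli ![a - a', b - b', c - c'] (by
          simp only [Fin.sum_univ_three, Matrix.cons_val]
          push_cast
          linear_combination h)
        have k0 : (p : ℤ) ∣ a - a' := key 0
        have k1 : (p : ℤ) ∣ b - b' := key 1
        have k2 : (p : ℤ) ∣ c - c' := key 2
        have z0 := Int.eq_zero_of_abs_lt_dvd k0 (by have := h2H 0; rw [abs_lt]; omega)
        have z1 := Int.eq_zero_of_abs_lt_dvd k1 (by have := h2H 1; rw [abs_lt]; omega)
        have z2 := Int.eq_zero_of_abs_lt_dvd k2 (by have := h2H 2; rw [abs_lt]; omega)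
        simp only [Prod.mk.injEq]
        omega
    rw [this]
    calc 2 * (H 0 * H 1 * H 2) ≤ (2 * H 0) * (H 1 * H 2) := by apply le_of_eq; ring
      _ ≤ _ := by gcongr <;> omega
  · intro x hx y hy
    simp only [B, B₀, Finset.mem_image, Finset.mem_product, Finset.mem_Icc, Prod.exists] at hx hy ⊢
    obtain ⟨a, b, c, h1, rfl⟩ := hx
    obtain ⟨a', b', c', h2, rfl⟩ := hy
    refine ⟨a - a', b - b', c - c', by omega, ?_⟩
    push_cast
    ring
end

section
/- Let p be a prime, {ω₁, ω₂, ω₃} a basis of F_{p³} over F_p, and B a box with 1 ≤ Hᵢ ≤ p for i = 1, 2, 3. Then for every z ∈ F_{p³}, the number f(z) of pairs (x, y) ∈ B × B with x·z = y is at most the number f₀(z) of pairs (x, y) ∈ B₀ × B₀ with x·z = y. -/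
open scoped Classical

/-- For every `z`, the number of solutions of `x·z = y` with `x, y ∈ B` is at most
the number of solutions with `x, y ∈ B₀`. -/
theorem stmt_9 (p : ℕ) (hp : p.Prime)
    (F : Type) [instField : Field F] [instFintype : Fintype F]
    (hcard : Fintype.card F = p ^ 3)
    (ω : Fin 3 → F)
    (hli : ∀ c : Fin 3 → ℤ, (∑ i, (c i : F) * ω i) = 0 → ∀ i, (p : ℤ) ∣ c i)
    (hspan : ∀ x : F, ∃ c : Fin 3 → ℤ, x = ∑ i, (c i : F) * ω i)
    (N : Fin 3 → ℤ) (H : Fin 3 → ℕ)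
    (hH : ∀ i, 1 ≤ H i ∧ H i ≤ p)
    (z : F) :
    let B : Finset F :=
      (Finset.Icc (N 0 + 1) (N 0 + (H 0 : ℤ)) ×ˢ
        Finset.Icc (N 1 + 1) (N 1 + (H 1 : ℤ)) ×ˢ
        Finset.Icc (N 2 + 1) (N 2 + (H 2 : ℤ))).image
        (fun x => (x.1 : F) * ω 0 + (x.2.1 : F) * ω 1 + (x.2.2 : F) * ω 2)
    let B₀ : Finset F :=
      (Finset.Icc (-(H 0 : ℤ)) (H 0 : ℤ) ×ˢ
        Finset.Icc (-(H 1 : ℤ)) (H 1 : ℤ) ×ˢ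
        Finset.Icc (-(H 2 : ℤ)) (H 2 : ℤ)).image
        (fun x => (x.1 : F) * ω 0 + (x.2.1 : F) * ω 1 + (x.2.2 : F) * ω 2)
    ((B ×ˢ B).filter (fun q => q.1 * z = q.2)).card ≤
      ((B₀ ×ˢ B₀).filter (fun q => q.1 * z = q.2)).card := by
  intro B B₀
  have hsub : ∀ a ∈ B, ∀ b ∈ B, a - b ∈ B₀ := by
    intro a ha b hb
    simp only [B, Finset.mem_image, Finset.mem_product, Finset.mem_Icc] at ha hb
    obtain ⟨u, hu, rfl⟩ := ha
    obtain ⟨v, hv, rfl⟩ := hb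
    simp only [B₀, Finset.mem_image, Finset.mem_product, Finset.mem_Icc]
    refine ⟨(u.1 - v.1, u.2.1 - v.2.1, u.2.2 - v.2.2), ?_, ?_⟩
    · dsimp only
      omega
    · push_cast
      ring
  rcases Finset.eq_empty_or_nonempty ((B ×ˢ B).filter (fun q => q.1 * z = q.2)) with h | ⟨r, hr⟩
  · rw [h]
    simp
  · apply Finset.card_le_card_of_injOn (fun q => q - r)
    · intro q hq
      have hq := Finset.mem_coe.mp hq
      rw [Finset.mem_filter, Finset.mem_product] at hq hr
      apply Finset.mem_coe.mpr
      rw [Finset.mem_filter, Finset.mem_product]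
      refine ⟨⟨hsub _ hq.1.1 _ hr.1.1, hsub _ hq.1.2 _ hr.1.2⟩, ?_⟩
      simp only [Prod.fst_sub, Prod.snd_sub, sub_mul, hq.2, hr.2]
    · intro a _ b _ hab
      exact sub_left_injective hab
end

section
/- Let p be a prime, {ω₁, ω₂, ω₃} a basis of F_{p³} over F_p, and let H₁, H₂, H₃ be integers with 1 ≤ H₁ ≤ H₂ ≤ H₃ < √(p/2). Let z ∈ F_{p³} \ F_p. If (x₁, x₂, x₃, y₁, y₂, y₃) ∈ ℤ⁶ satisfies z·(x₁ω₁ + x₂ω₂ + x₃ω₃) = y₁ω₁ + y₂ω₂ + y₃ω₃ and |xᵢ| < Hᵢ/H₂ and |yᵢ| < Hᵢ/H₂ for i = 1, 2, 3, then x₁ = x₂ = x₃ = y₁ = y₂ = y₃ = 0. (Equivalently, the first successive minimum of the box D = {|xᵢ|, |yᵢ| ≤ Hᵢ} with respect to the lattice Γ_z is at least H₂⁻¹.) -/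
open scoped Classical

/-- Lower bound for the first successive minimum: for `z ∉ F_p`, the lattice `Γ_z`
contains no nonzero point of the box scaled by `H₂⁻¹`. -/
theorem stmt_11 (p : ℕ) (hp : p.Prime)
    (F : Type) [instField : Field F] [instFintype : Fintype F]
    (hcard : Fintype.card F = p ^ 3)
    (ω : Fin 3 → F)
    (hli : ∀ c : Fin 3 → ℤ, (∑ i, (c i : F) * ω i) = 0 → ∀ i, (p : ℤ) ∣ c i)
    (hspan : ∀ x : F, ∃ c : Fin 3 → ℤ, x = ∑ i, (c i : F) * ω i)
    (H : Fin 3 → ℕ)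
    (hH1 : ∀ i, 1 ≤ H i)
    (hH01 : H 0 ≤ H 1) (hH12 : H 1 ≤ H 2)
    (hHlt : (H 2 : ℝ) < Real.sqrt ((p : ℝ) / 2))
    (z : F) (hz : ¬ ∃ t : ℤ, z = (t : F))
    (x y : Fin 3 → ℤ)
    (hmem : z * (∑ i, (x i : F) * ω i) = ∑ i, (y i : F) * ω i)
    (hx : ∀ i, |(x i : ℝ)| < (H i : ℝ) / (H 1 : ℝ))
    (hy : ∀ i, |(y i : ℝ)| < (H i : ℝ) / (H 1 : ℝ)) :
    (∀ i, x i = 0) ∧ (∀ i, y i = 0) := by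
  have hp0 : (p : F) = 0 := by
    have h : ((Fintype.card F : ℕ) : F) = 0 := Nat.cast_card_eq_zero F
    rw [hcard] at h
    push_cast at h
    exact pow_eq_zero_iff (by norm_num) |>.1 h
  have h1 : (1 : ℝ) ≤ H 1 := by exact_mod_cast hH1 1
  have h1pos : (0 : ℝ) < H 1 := by linarith
  have small : ∀ a : ℤ, |(a : ℝ)| < 1 → a = 0 := by
    intro a ha
    have : |a| < 1 := by exact_mod_cast ha
    exact Int.abs_lt_one_iff.1 this
  have b0 : (H 0 : ℝ) / H 1 ≤ 1 := by
    rw [div_le_one h1pos]; exact_mod_cast hH01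
  have b1 : (H 1 : ℝ) / H 1 = 1 := div_self h1pos.ne'
  have x0 := small _ ((hx 0).trans_le b0)
  have y0 := small _ ((hy 0).trans_le b0)
  have x1 := small _ ((hx 1).trans_le b1.le)
  have y1 := small _ ((hy 1).trans_le b1.le)
  have hpR : (2 : ℝ) ≤ p := by exact_mod_cast hp.two_le
  have b2 : (H 2 : ℝ) / H 1 < p := by
    have e1 : (H 2 : ℝ) / H 1 ≤ H 2 := div_le_self (by positivity) h1
    have e2 : Real.sqrt ((p : ℝ) / 2) ≤ p := by
      rw [Real.sqrt_le_left (by linarith)]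
      nlinarith
    linarith
  have dv : ∀ a : ℤ, |(a : ℝ)| < (H 2 : ℝ) / H 1 → (p : ℤ) ∣ a → a = 0 := by
    intro a ha hd
    have h : |a| < (p : ℤ) := by exact_mod_cast ha.trans b2
    exact Int.eq_zero_of_abs_lt_dvd hd h
  have hω : ω 2 ≠ 0 := by
    intro h
    have h3 := hli ![0, 0, 1] (by simp [Fin.sum_univ_three, h]) 2
    have h4 : (p : ℤ) ∣ 1 := by simpa using h3
    have h5 : p ∣ 1 := by exact_mod_cast h4
    exact hp.one_lt.ne' (Nat.dvd_one.1 h5)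
  have key : z * (x 2 : F) = (y 2 : F) := by
    simp only [Fin.sum_univ_three, x0, x1, y0, y1, Int.cast_zero, zero_mul, zero_add] at hmem
    rw [← mul_assoc] at hmem
    exact mul_right_cancel₀ hω hmem
  have hxd : (p : ℤ) ∣ x 2 := by
    by_contra hnd
    obtain ⟨u, v, huv⟩ := (Nat.prime_iff_prime_int.1 hp).coprime_iff_not_dvd.2 hnd
    apply hz
    refine ⟨v * y 2, ?_⟩
    have h : ((u * p + v * x 2 : ℤ) : F) = 1 := by rw [huv]; simp
    push_cast at h ⊢
    rw [hp0] at h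
    rw [← key]
    linear_combination (-z) * h
  have x2 := dv _ (hx 2) hxd
  have hy0 : (y 2 : F) = 0 := by rw [← key, x2]; simp
  have y2 : y 2 = 0 := by
    apply dv _ (hy 2)
    have h3 := hli ![0, 0, y 2] (by simp [Fin.sum_univ_three, hy0]) 2
    simpa using h3
  constructor
  · intro i; fin_cases i <;> assumption
  · intro i; fin_cases i <;> assumption
end

section
/- Let p be a prime, {ω₁, ω₂, ω₃} a basis of F_{p³} over F_p, and let H₁, H₂, H₃ be integers with 1 ≤ H₁ ≤ H₂ ≤ H₃ < √(p/2). Let z ∈ F_{p³} \ F_p. If u = (u₁, ..., u₆) and v = (v₁, ..., v₆) are vectors of Γ_z whose coordinates satisfy |u₁|, |v₁|, |u₄|, |v₄| < H₁/H₁, |u₂|, |v₂|, |u₅|, |v₅| < H₂/H₁ and |u₃|, |v₃|, |u₆|, |v₆| < H₃/H₁, then u and v are linearly dependent over ℚ (i.e. there exist integers (a, b) ≠ (0, 0) with a·u + b·v = 0). (Equivalently, the second successive minimum of the box D = {|xᵢ|, |yᵢ| ≤ Hᵢ} with respect to Γ_z is at least H₁⁻¹.) -/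
open scoped Classical

lemma aux_quad (p : ℕ) [Fact p.Prime] (F : Type) [Field F] [Fintype F] [CharP F p]
    (hcard : Fintype.card F = p ^ 3) (z : F) (hz : ¬ ∃ t : ℤ, z = (t : F))
    (a b c : ℤ) (h : (a : F) * z ^ 2 + b * z + c = 0) : (p : ℤ) ∣ a := by
  letI : Algebra (ZMod p) F := ZMod.algebra F p
  have hfr : Module.finrank (ZMod p) F = 3 := by
    have h1 := Module.card_eq_pow_finrank (K := ZMod p) (V := F)
    rw [hcard, ZMod.card] at h1
    exact (Nat.pow_right_injective (Fact.out : p.Prime).two_le h1).symm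
  have hint : IsIntegral (ZMod p) z := Algebra.IsIntegral.isIntegral z
  have hdvd : (minpoly (ZMod p) z).natDegree ∣ 3 := by
    rw [← hfr]; exact minpoly.degree_dvd hint
  by_contra hna
  have ha : (a : ZMod p) ≠ 0 := by
    rwa [Ne, ZMod.intCast_zmod_eq_zero_iff_dvd]
  let P : Polynomial (ZMod p) := Polynomial.C (a : ZMod p) * Polynomial.X ^ 2 +
    Polynomial.C (b : ZMod p) * Polynomial.X + Polynomial.C (c : ZMod p)
  have hP2 : P.natDegree = 2 := Polynomial.natDegree_quadratic ha
  have hP0 : P ≠ 0 := by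
    intro h0; rw [h0] at hP2; simp at hP2
  have hPz : Polynomial.aeval z P = 0 := by
    simp only [P, map_add, map_mul, map_pow, Polynomial.aeval_X, Polynomial.aeval_C, map_intCast]
    exact h
  have hle := Polynomial.natDegree_le_of_dvd (minpoly.dvd _ z hPz) hP0
  rcases (Nat.dvd_prime Nat.prime_three).1 hdvd with h1 | h3
  · obtain ⟨t, ht⟩ := minpoly.natDegree_eq_one_iff.1 h1
    obtain ⟨n, rfl⟩ := ZMod.intCast_surjective t
    exact hz ⟨n, by rw [← ht, map_intCast]⟩
  · omega

/-- Lower bound for the second successive minimum: for `z ∉ F_p`, any two lattice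
points of `Γ_z` in the box scaled by `H₁⁻¹` are linearly dependent over `ℚ`. -/
theorem stmt_12 (p : ℕ) (hp : p.Prime)
    (F : Type) [instField : Field F] [instFintype : Fintype F]
    (hcard : Fintype.card F = p ^ 3)
    (ω : Fin 3 → F)
    (hli : ∀ c : Fin 3 → ℤ, (∑ i, (c i : F) * ω i) = 0 → ∀ i, (p : ℤ) ∣ c i)
    (hspan : ∀ x : F, ∃ c : Fin 3 → ℤ, x = ∑ i, (c i : F) * ω i)
    (H : Fin 3 → ℕ)
    (hH1 : ∀ i, 1 ≤ H i)
    (hH01 : H 0 ≤ H 1) (hH12 : H 1 ≤ H 2)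
    (hHlt : (H 2 : ℝ) < Real.sqrt ((p : ℝ) / 2))
    (z : F) (hz : ¬ ∃ t : ℤ, z = (t : F))
    (ux uy vx vy : Fin 3 → ℤ)
    (humem : z * (∑ i, (ux i : F) * ω i) = ∑ i, (uy i : F) * ω i)
    (hvmem : z * (∑ i, (vx i : F) * ω i) = ∑ i, (vy i : F) * ω i)
    (hux : ∀ i, |(ux i : ℝ)| < (H i : ℝ) / (H 0 : ℝ))
    (huy : ∀ i, |(uy i : ℝ)| < (H i : ℝ) / (H 0 : ℝ))
    (hvx : ∀ i, |(vx i : ℝ)| < (H i : ℝ) / (H 0 : ℝ))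
    (hvy : ∀ i, |(vy i : ℝ)| < (H i : ℝ) / (H 0 : ℝ)) :
    ∃ a b : ℤ, ¬ (a = 0 ∧ b = 0) ∧
      (∀ i, a * ux i + b * vx i = 0) ∧ (∀ i, a * uy i + b * vy i = 0) := by
  haveI : Fact p.Prime := ⟨hp⟩
  have hpF : (p : F) = 0 := by
    have h := Nat.cast_card_eq_zero F
    rw [hcard] at h
    push_cast at h
    exact pow_eq_zero_iff (by norm_num) |>.1 h
  haveI : CharP F p := (CharP.charP_iff_prime_eq_zero hp).2 hpF
  have hH0 : (1 : ℝ) ≤ H 0 := by exact_mod_cast hH1 0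
  have hb : 2 * (H 2 : ℤ) ^ 2 < p := by
    have h := (Real.lt_sqrt (by positivity)).1 hHlt
    have : 2 * (H 2 : ℝ) ^ 2 < p := by linarith
    exact_mod_cast this
  have key0 : ∀ x : Fin 3 → ℤ, (∀ i, |(x i : ℝ)| < (H i : ℝ) / (H 0 : ℝ)) → x 0 = 0 := by
    intro x hx
    have h := hx 0
    rw [div_self (by positivity)] at h
    have h' : |x 0| < 1 := by exact_mod_cast h
    exact Int.abs_lt_one_iff.1 h'
  have keyb : ∀ x : Fin 3 → ℤ, (∀ i, |(x i : ℝ)| < (H i : ℝ) / (H 0 : ℝ)) →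
      ∀ i, |x i| ≤ H 2 := by
    intro x hx i
    have h := (hx i).le.trans (div_le_self (by positivity) hH0)
    have h' : |x i| ≤ H i := by exact_mod_cast h
    have : H i ≤ H 2 := by fin_cases i <;> simp <;> omega
    omega
  have hu0 := key0 ux hux
  have hv0 := key0 vx hvx
  have hu0' := key0 uy huy
  have hv0' := key0 vy hvy
  -- linear relations modulo p propagate from x to y
  have rel : ∀ α β : ℤ, (∀ i, (p : ℤ) ∣ α * ux i + β * vx i) →
      ∀ i, (p : ℤ) ∣ α * uy i + β * vy i := by
    intro α β h
    apply hli (fun i => α * uy i + β * vy i)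
    have h1 : ∀ i, (α : F) * ux i + β * vx i = 0 := by
      intro i
      have := (CharP.intCast_eq_zero_iff F p _).2 (h i)
      push_cast at this
      exact this
    have e1 : ∑ i, ((α * uy i + β * vy i : ℤ) : F) * ω i
        = α * ∑ i, (uy i : F) * ω i + β * ∑ i, (vy i : F) * ω i := by
      simp only [Fin.sum_univ_three]; push_cast; ring
    have e2 : α * ∑ i, (uy i : F) * ω i + β * ∑ i, (vy i : F) * ω i
        = z * ∑ i, ((α : F) * ux i + β * vx i) * ω i := by
      rw [← humem, ← hvmem]
      simp only [Fin.sum_univ_three]; ring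
    rw [e1, e2]
    simp [h1]
  have hω : ω 1 ≠ 0 := by
    intro h
    have := hli ![0, 1, 0] (by simp [Fin.sum_univ_three, h]) 1
    simp only [Matrix.cons_val] at this
    have h2 := hp.two_le
    have := Int.le_of_dvd (by norm_num) this
    omega
  have hd : (p : ℤ) ∣ ux 1 * vx 2 - ux 2 * vx 1 := by
    apply aux_quad p F hcard z hz _ (-(ux 1 * vy 2) - uy 1 * vx 2 + ux 2 * vy 1 + uy 2 * vx 1)
      (uy 1 * vy 2 - uy 2 * vy 1)
    simp only [Fin.sum_univ_three, hu0, hv0, hu0', hv0'] at humem hvmem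
    apply mul_right_cancel₀ hω
    push_cast at humem hvmem ⊢
    linear_combination (z * vx 2 - vy 2) * humem - (z * ux 2 - uy 2) * hvmem
  -- all minors vanish mod p
  let U : Fin 3 ⊕ Fin 3 → ℤ := Sum.elim ux uy
  let V : Fin 3 ⊕ Fin 3 → ℤ := Sum.elim vx vy
  have hUb : ∀ i, |U i| ≤ H 2 := by
    rintro (i | i)
    · exact keyb ux hux i
    · exact keyb uy huy i
  have hVb : ∀ i, |V i| ≤ H 2 := by
    rintro (i | i)
    · exact keyb vx hvx i
    · exact keyb vy hvy i
  have rel2 : ∀ α β : ℤ, (∀ i, (p : ℤ) ∣ α * ux i + β * vx i) →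
      ∀ i, (p : ℤ) ∣ α * U i + β * V i := by
    rintro α β h (i | i)
    · exact h i
    · exact rel α β h i
  have hpi : Prime (p : ℤ) := Nat.prime_iff_prime_int.1 hp
  have hminx : ∀ i j, (p : ℤ) ∣ ux i * vx j - ux j * vx i := by
    have hd' : (p : ℤ) ∣ ux 2 * vx 1 - ux 1 * vx 2 := (dvd_sub_comm).1 hd
    intro i j
    fin_cases i <;> fin_cases j <;> simp [hu0, hv0, hd, hd', mul_comm]
    all_goals first | (convert hd using 1; ring1) | (convert hd' using 1; ring1)
  have hmin : ∀ i j, (p : ℤ) ∣ U i * V j - U j * V i := by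
    intro i j
    by_cases hv : ∀ k, (p : ℤ) ∣ vx k
    · have h := rel2 0 1 (by simpa using hv)
      simp only [zero_mul, one_mul, zero_add] at h
      exact dvd_sub ((h j).mul_left _) ((h i).mul_left _)
    · push Not at hv
      obtain ⟨k, hk⟩ := hv
      have h := rel2 (vx k) (-ux k) (by
        intro l
        have e : vx k * ux l + -ux k * vx l = ux l * vx k - ux k * vx l := by ring
        rw [e]; exact hminx l k)
      have h3 : (p : ℤ) ∣ vx k * (U i * V j - U j * V i) := by
        have := dvd_sub ((h i).mul_left (V j)) ((h j).mul_left (V i))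
        have e : vx k * (U i * V j - U j * V i) = V j * (vx k * U i + -ux k * V i) -
            V i * (vx k * U j + -ux k * V j) := by ring
        rw [e]; exact this
      exact (hpi.dvd_or_dvd h3).resolve_left hk
  have hzero : ∀ i j, U i * V j - U j * V i = 0 := by
    intro i j
    apply Int.eq_zero_of_abs_lt_dvd (hmin i j)
    have h1 : |U i * V j| ≤ (H 2 : ℤ) * H 2 := by
      rw [abs_mul]; exact mul_le_mul (hUb i) (hVb j) (abs_nonneg _) (by positivity)
    have h2 : |U j * V i| ≤ (H 2 : ℤ) * H 2 := by
      rw [abs_mul]; exact mul_le_mul (hUb j) (hVb i) (abs_nonneg _) (by positivity)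
    have := abs_sub (U i * V j) (U j * V i)
    nlinarith
  have fin : ∃ a b : ℤ, ¬ (a = 0 ∧ b = 0) ∧ ∀ i, a * U i + b * V i = 0 := by
    by_cases hV : ∀ i, V i = 0
    · exact ⟨0, 1, by simp, by simp [hV]⟩
    · push Not at hV
      obtain ⟨j, hj⟩ := hV
      exact ⟨V j, -U j, fun h => hj h.1, fun i => by linear_combination hzero i j⟩
  obtain ⟨a, b, hab, h⟩ := fin
  exact ⟨a, b, hab, fun i => h (Sum.inl i), fun i => h (Sum.inr i)⟩
end

section
/- Let p be a prime and {ω₁, ω₂, ω₃} a basis of F_{p³} over F_p. Let z', z'' ∈ F_{p³} and suppose u = (x₁, x₂, x₃, y₁, y₂, y₃) ∈ ℤ⁶ is a nonzero vector with |xᵢ| < p and |yᵢ| < p for all i, such that u ∈ Γ_{z'} ∩ Γ_{z''}. Then z' = z''. (In particular, a nonzero lattice vector of Γ_z lying in the box with all coordinates of absolute value less than p determines z uniquely.) -/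
open scoped Classical

/-- A nonzero lattice vector with all coordinates of absolute value less than `p`
belongs to `Γ_z` for at most one `z`. -/
theorem stmt_13 (p : ℕ) (hp : p.Prime)
    (F : Type) [instField : Field F] [instFintype : Fintype F]
    (hcard : Fintype.card F = p ^ 3)
    (ω : Fin 3 → F)
    (hli : ∀ c : Fin 3 → ℤ, (∑ i, (c i : F) * ω i) = 0 → ∀ i, (p : ℤ) ∣ c i)
    (hspan : ∀ x : F, ∃ c : Fin 3 → ℤ, x = ∑ i, (c i : F) * ω i)
    (z' z'' : F)
    (x y : Fin 3 → ℤ)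
    (hne : ¬ ((∀ i, x i = 0) ∧ (∀ i, y i = 0)))
    (hx : ∀ i, |x i| < (p : ℤ)) (hy : ∀ i, |y i| < (p : ℤ))
    (hmem' : z' * (∑ i, (x i : F) * ω i) = ∑ i, (y i : F) * ω i)
    (hmem'' : z'' * (∑ i, (x i : F) * ω i) = ∑ i, (y i : F) * ω i) :
    z' = z'' := by
  by_cases h : (∑ i, (x i : F) * ω i) = 0
  · exfalso
    have h2 : (∑ i, (y i : F) * ω i) = 0 := by rw [← hmem', h, mul_zero]
    exact hne ⟨fun i => Int.eq_zero_of_abs_lt_dvd (hli x h i) (hx i),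
      fun i => Int.eq_zero_of_abs_lt_dvd (hli y h2 i) (hy i)⟩
  · exact mul_right_cancel₀ h (hmem'.trans hmem''.symm)
end

section
/- Let p be a prime and {ω₁, ω₂, ω₃} a basis of F_{p³} over F_p. Let z', z'' ∈ F_{p³} with z' ≠ z''. Suppose u₁, u₂, u₃, v₁, v₂, v₃ are integers with |uᵢ| < p and |vᵢ| < p for all i, such that for every (x₁, x₂, x₃, y₁, y₂, y₃) ∈ Γ_{z'} and also for every (x₁, x₂, x₃, y₁, y₂, y₃) ∈ Γ_{z''}, the integer x₁u₁ + x₂u₂ + x₃u₃ + y₁v₁ + y₂v₂ + y₃v₃ is divisible by p. Then u₁ = u₂ = u₃ = v₁ = v₂ = v₃ = 0. (That is, distinct elements z have no common nonzero small vector in the polar lattices Γ_z*.) -/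
open scoped Classical

/-- Distinct elements `z' ≠ z''` admit no common nonzero small vector in the polar
lattices `Γ_{z'}*` and `Γ_{z''}*`. -/
theorem stmt_14 (p : ℕ) (hp : p.Prime)
    (F : Type) [instField : Field F] [instFintype : Fintype F]
    (hcard : Fintype.card F = p ^ 3)
    (ω : Fin 3 → F)
    (hli : ∀ c : Fin 3 → ℤ, (∑ i, (c i : F) * ω i) = 0 → ∀ i, (p : ℤ) ∣ c i)
    (hspan : ∀ x : F, ∃ c : Fin 3 → ℤ, x = ∑ i, (c i : F) * ω i)
    (z' z'' : F) (hzz : z' ≠ z'')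
    (u v : Fin 3 → ℤ)
    (hu : ∀ i, |u i| < (p : ℤ)) (hv : ∀ i, |v i| < (p : ℤ))
    (hpolar' : ∀ x y : Fin 3 → ℤ,
      z' * (∑ i, (x i : F) * ω i) = ∑ i, (y i : F) * ω i →
      (p : ℤ) ∣ (∑ i, x i * u i + ∑ i, y i * v i))
    (hpolar'' : ∀ x y : Fin 3 → ℤ,
      z'' * (∑ i, (x i : F) * ω i) = ∑ i, (y i : F) * ω i →
      (p : ℤ) ∣ (∑ i, x i * u i + ∑ i, y i * v i)) :
    (∀ i, u i = 0) ∧ (∀ i, v i = 0) := by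
  have small : ∀ a : ℤ, |a| < (p : ℤ) → (p : ℤ) ∣ a → a = 0 := fun a h1 h2 =>
    Int.eq_zero_of_abs_lt_dvd h2 h1
  have hd : z' - z'' ≠ 0 := sub_ne_zero.mpr hzz
  have hvz : ∀ i, v i = 0 := by
    intro i
    apply small _ (hv i)
    obtain ⟨x, hx⟩ := hspan (ω i / (z' - z''))
    obtain ⟨a, ha⟩ := hspan (z' * (ω i / (z' - z'')))
    obtain ⟨b, hb⟩ := hspan (z'' * (ω i / (z' - z'')))
    have h1 := hpolar' x a (by rw [← hx, ha])
    have h2 := hpolar'' x b (by rw [← hx, hb])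
    have h3 : ∑ j, (a j : F) * ω j - ∑ j, (b j : F) * ω j = ω i := by
      rw [← ha, ← hb]
      field_simp
    have h4 := hli (fun j => a j - b j - (Pi.single i 1 : Fin 3 → ℤ) j) (by
      have h5 : ∑ j, (((Pi.single i 1 : Fin 3 → ℤ) j : ℤ) : F) * ω j = ω i := by
        simp [Pi.single_apply]
      push_cast
      simp only [sub_mul, Finset.sum_sub_distrib]
      rw [h3, h5, sub_self])
    have h6 : (p : ℤ) ∣ ∑ j, (a j - b j - (Pi.single i 1 : Fin 3 → ℤ) j) * v j :=
      Finset.dvd_sum fun j _ => Dvd.dvd.mul_right (h4 j) _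
    have h7 : ∑ j, (Pi.single i 1 : Fin 3 → ℤ) j * v j = v i := by
      simp [Pi.single_apply]
    simp only [sub_mul, Finset.sum_sub_distrib] at h6
    rw [h7] at h6
    have h8 := dvd_sub (dvd_sub h1 h2) h6
    ring_nf at h8
    exact h8
  refine ⟨fun i => small _ (hu i) ?_, hvz⟩
  obtain ⟨y, hy⟩ := hspan (z' * ∑ j, (((Pi.single i 1 : Fin 3 → ℤ) j : ℤ) : F) * ω j)
  have h := hpolar' _ y hy
  simpa [hvz, Pi.single_apply] using h
end

section
/- There is an absolute constant C > 0 such that for every prime p ≥ 3 and every integer H with 1 ≤ H ≤ √p the following holds. Let Z_H ⊆ F_p* be the set of ratios {x·y⁻¹ mod p : x, y ∈ ℤ, 1 ≤ |x| ≤ H, 1 ≤ |y| ≤ H}, and for z ∈ F_p let f(z) = #{(x, y) ∈ ℤ² : |x| ≤ H, |y| ≤ H, x·z ≡ y (mod p)}. Then Σ_{z ∈ Z_H} f(z)² ≤ C·H²·log p. -/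
open scoped Classical

lemma aux_count (F : Finset (ℤ × ℤ)) (a b p H : ℤ) (ha : a ≠ 0) (hba : |b| ≤ |a|) (haH : |a| ≤ H)
    (hp : 0 < p) (hHp : H * H < p)
    (h1 : ∀ q ∈ F, |q.1| ≤ H) (h2 : ∀ q ∈ F, |q.2| ≤ H)
    (hd : ∀ q ∈ F, p ∣ a * q.2 - b * q.1)
    (hs : ∀ q ∈ F, ∀ r ∈ F, q ≠ r → a * (q.2 - r.2) = b * (q.1 - r.1) →
      |a| ≤ max |q.1 - r.1| |q.2 - r.2|) :
    (F.card : ℤ) * |a| ≤ 12 * H := by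
  have hm : 0 < |a| := abs_pos.mpr ha
  have hH : 0 < H := lt_of_lt_of_le hm haH
  have hcard : F.card ≤ (Finset.Icc (-1 : ℤ) 1 ×ˢ Finset.Icc (-(H / |a|) - 1) (H / |a|)).card := by
    apply Finset.card_le_card_of_injOn (fun q => ((a * q.2 - b * q.1) / p, q.1 / |a|))
    · intro q hq
      have e1 := h1 q hq
      have e2 := h2 q hq
      obtain ⟨k, hk⟩ := hd q hq
      have hb : |a * q.2 - b * q.1| ≤ H * H + H * H := by
        calc |a * q.2 - b * q.1| ≤ |a * q.2| + |b * q.1| := abs_sub _ _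
          _ = |a| * |q.2| + |b| * |q.1| := by rw [abs_mul, abs_mul]
          _ ≤ H * H + H * H := by
            have := hba.trans haH
            gcongr
      rw [hk, abs_le] at hb
      simp only [Finset.coe_product, Finset.coe_Icc, Set.mem_prod, Set.mem_Icc]
      rw [hk, Int.mul_ediv_cancel_left _ hp.ne']
      rw [abs_le] at e1
      refine ⟨⟨?_, ?_⟩, ?_, ?_⟩
      · by_contra hc
        have : k ≤ -2 := by omega
        nlinarith
      · by_contra hc
        have : 2 ≤ k := by omega
        nlinarith
      · rw [Int.le_ediv_iff_mul_le hm]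
        have := Int.lt_ediv_add_one_mul_self H hm
        nlinarith
      · exact Int.ediv_le_ediv hm e1.2
    · intro q hq r hr hqr
      by_contra hne
      simp only [Prod.mk.injEq] at hqr
      obtain ⟨g1, g2⟩ := hqr
      have hdet : a * q.2 - b * q.1 = a * r.2 - b * r.1 := by
        rw [← Int.ediv_mul_cancel (hd q hq), ← Int.ediv_mul_cancel (hd r hr), g1]
      have hu : a * (q.2 - r.2) = b * (q.1 - r.1) := by linarith
      have hlt : |q.1 - r.1| < |a| := by
        have i1 := Int.lt_ediv_add_one_mul_self q.1 hm
        have i2 := Int.lt_ediv_add_one_mul_self r.1 hm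
        have i3 := Int.ediv_mul_le q.1 hm.ne'
        have i4 := Int.ediv_mul_le r.1 hm.ne'
        rw [g2] at i1 i3
        rw [abs_lt]
        constructor <;> linarith
      have hle : |q.2 - r.2| ≤ |q.1 - r.1| := by
        have h := congrArg abs hu
        rw [abs_mul, abs_mul] at h
        have : |a| * |q.2 - r.2| ≤ |a| * |q.1 - r.1| := by
          rw [h]; gcongr
        exact le_of_mul_le_mul_left this hm
      have := hs q hq r hr hne hu
      rw [max_eq_left hle] at this
      omega
  rw [Finset.card_product, Int.card_Icc, Int.card_Icc] at hcard
  have hq : 0 ≤ H / |a| := Int.ediv_nonneg hH.le hm.le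
  have hc2 : (F.card : ℤ) ≤ 3 * (2 * (H / |a|) + 2) := by
    have : (F.card : ℤ) ≤ ((1 + 1 - -1 : ℤ).toNat * (H / |a| + 1 - (-(H / |a|) - 1)).toNat : ℕ) := by
      exact_mod_cast hcard
    push_cast at this
    rw [Int.toNat_of_nonneg (by omega)] at this
    linarith
  have := Int.ediv_mul_le H hm.ne'
  nlinarith

lemma aux_short (p H : ℕ) (hp : p.Prime) (hHp : H * H < p) (z : ZMod p)
    (hz : ∃ x y : ℤ, 1 ≤ |x| ∧ |x| ≤ (H : ℤ) ∧
              1 ≤ |y| ∧ |y| ≤ (H : ℤ) ∧ (y : ZMod p) * z = (x : ZMod p)) :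
    ∃ v ∈ (Finset.Icc (-(H : ℤ)) (H : ℤ) ×ˢ Finset.Icc (-(H : ℤ)) (H : ℤ)), v ≠ 0 ∧
      (v.1 : ZMod p) * z = v.2 ∧
      ((((Finset.Icc (-(H : ℤ)) (H : ℤ) ×ˢ Finset.Icc (-(H : ℤ)) (H : ℤ)).filter
              (fun q => (q.1 : ZMod p) * z = (q.2 : ZMod p))).card : ℤ)) * max |v.1| |v.2| ≤ 12 * H := by
  set F := ((Finset.Icc (-(H : ℤ)) (H : ℤ) ×ˢ Finset.Icc (-(H : ℤ)) (H : ℤ)).filter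
              (fun q => (q.1 : ZMod p) * z = (q.2 : ZMod p))) with hF
  have hmem : ∀ q : ℤ × ℤ, q ∈ F ↔ (|q.1| ≤ H ∧ |q.2| ≤ H) ∧ (q.1 : ZMod p) * z = q.2 := by
    intro q
    simp only [hF, Finset.mem_filter, Finset.mem_product, Finset.mem_Icc, abs_le]
  have hne : (F.filter (fun q => q ≠ 0)).Nonempty := by
    obtain ⟨x, y, hx1, hx, hy1, hy, h⟩ := hz
    refine ⟨(y, x), ?_⟩
    rw [Finset.mem_filter, hmem]
    refine ⟨⟨⟨hy, hx⟩, h⟩, ?_⟩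
    intro h0
    simp only [Prod.mk_eq_zero] at h0
    rw [h0.1] at hy1
    simp at hy1
  obtain ⟨v, hv, hmin⟩ := Finset.exists_min_image _ (fun q : ℤ × ℤ => max |q.1| |q.2|) hne
  rw [Finset.mem_filter, hmem] at hv
  obtain ⟨⟨⟨v1, v2⟩, vz⟩, v0⟩ := hv
  have hp0 : (0 : ℤ) < p := by exact_mod_cast hp.pos
  have hHp' : (H : ℤ) * H < p := by exact_mod_cast hHp
  have hdvd : ∀ q ∈ F, (p : ℤ) ∣ v.1 * q.2 - v.2 * q.1 := by
    intro q hq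
    have := ((hmem q).1 hq).2
    rw [← ZMod.intCast_zmod_eq_zero_iff_dvd]
    push_cast
    rw [← this, ← vz]; ring
  have hsep : ∀ q ∈ F, ∀ r ∈ F, q ≠ r → max |v.1| |v.2| ≤ max |q.1 - r.1| |q.2 - r.2| := by
    intro q hq r hr hqr
    by_contra hc
    push Not at hc
    have hmm : max |v.1| |v.2| ≤ (H : ℤ) := max_le v1 v2
    have : q - r ∈ F.filter (fun q => q ≠ 0) := by
      rw [Finset.mem_filter, hmem]
      refine ⟨⟨⟨?_, ?_⟩, ?_⟩, sub_ne_zero.mpr hqr⟩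
      · exact (le_max_left _ _).trans (hc.le.trans hmm)
      · exact (le_max_right _ _).trans (hc.le.trans hmm)
      · simp only [Prod.fst_sub, Prod.snd_sub]
        push_cast
        rw [sub_mul, ((hmem q).1 hq).2, ((hmem r).1 hr).2]
    have := hmin _ this
    simp only [Prod.fst_sub, Prod.snd_sub] at this
    omega
  refine ⟨v, ?_, v0, vz, ?_⟩
  · simp only [Finset.mem_product, Finset.mem_Icc, ← abs_le]
    exact ⟨v1, v2⟩
  rcases le_total |v.2| |v.1| with hle | hle
  · rw [max_eq_left hle]
    have hv1 : v.1 ≠ 0 := by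
      intro h
      rw [h, abs_zero] at hle
      exact v0 (Prod.ext h (abs_nonpos_iff.mp hle))
    apply aux_count F v.1 v.2 p H hv1 hle v1 hp0 hHp'
    · exact fun q hq => ((hmem q).1 hq).1.1
    · exact fun q hq => ((hmem q).1 hq).1.2
    · exact hdvd
    · intro q hq r hr hqr _
      have := hsep q hq r hr hqr
      rwa [max_eq_left hle] at this
  · rw [max_eq_right hle]
    have hv1 : v.2 ≠ 0 := by
      intro h
      rw [h, abs_zero] at hle
      exact v0 (Prod.ext (abs_nonpos_iff.mp hle) h)
    have hcard : (F.image Prod.swap).card = F.card :=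
      Finset.card_image_of_injective _ Prod.swap_injective
    have hm' : ∀ q ∈ F.image Prod.swap, q.swap ∈ F := by
      intro q hq
      rw [Finset.mem_image] at hq
      obtain ⟨r, hr, rfl⟩ := hq
      simpa using hr
    rw [← hcard]
    apply aux_count (F.image Prod.swap) v.2 v.1 p H hv1 hle v2 hp0 hHp'
    · exact fun q hq => ((hmem _).1 (hm' q hq)).1.2
    · exact fun q hq => ((hmem _).1 (hm' q hq)).1.1
    · intro q hq
      have := hdvd _ (hm' q hq)
      rw [← dvd_neg] at this
      simpa using this
    · intro q hq r hr hqr _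
      have := hsep _ (hm' q hq) _ (hm' r hr) (fun h => hqr (Prod.swap_injective h))
      rw [max_eq_right hle, max_comm] at this
      exact this

lemma aux_sum_s16 (H : ℕ) :
    ∑ v ∈ (Finset.Icc (-(H : ℤ)) (H : ℤ) ×ˢ Finset.Icc (-(H : ℤ)) (H : ℤ)).filter (fun v => v ≠ 0),
      (1 : ℝ) / ((max |v.1| |v.2| : ℤ) : ℝ) ^ 2 ≤ 12 * (1 + Real.log H) := by
  have hmaps : ∀ v ∈ (Finset.Icc (-(H : ℤ)) (H : ℤ) ×ˢ Finset.Icc (-(H : ℤ)) (H : ℤ)).filter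
      (fun v => v ≠ 0), (max |v.1| |v.2|).toNat ∈ Finset.Icc 1 H := by
    intro v hv
    simp only [Finset.mem_filter, Finset.mem_product, Finset.mem_Icc, ← abs_le] at hv
    rw [Finset.mem_Icc]
    have h1 : 0 < max |v.1| |v.2| := by
      by_contra hc
      push Not at hc
      exact hv.2 (Prod.ext (abs_nonpos_iff.mp ((le_max_left _ _).trans hc))
        (abs_nonpos_iff.mp ((le_max_right _ _).trans hc)))
    have h2 := max_le hv.1.1 hv.1.2
    omega
  rw [← Finset.sum_fiberwise_of_maps_to hmaps]
  have hh : ∑ m ∈ Finset.Icc 1 H, (1 : ℝ) / m ≤ 1 + Real.log H := by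
    have := harmonic_le_one_add_log H
    rw [harmonic_eq_sum_Icc] at this
    push_cast at this
    simpa [one_div] using this
  refine le_trans ?_ (mul_le_mul_of_nonneg_left hh (by norm_num : (0 : ℝ) ≤ 12))
  rw [Finset.mul_sum]
  apply Finset.sum_le_sum
  intro m hm
  rw [Finset.mem_Icc] at hm
  have hm0 : (0 : ℝ) < m := by exact_mod_cast hm.1
  set G := ((Finset.Icc (-(H : ℤ)) (H : ℤ) ×ˢ Finset.Icc (-(H : ℤ)) (H : ℤ)).filter
      (fun v => v ≠ 0)).filter (fun v => (max |v.1| |v.2|).toNat = m) with hG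
  have hmG : ∀ v ∈ G, max |v.1| |v.2| = (m : ℤ) := by
    intro v hv
    have := (Finset.mem_filter.mp hv).2
    omega
  have hcard : G.card ≤ 12 * m := by
    have hsub : G ⊆ (({(m : ℤ), -(m : ℤ)} : Finset ℤ) ×ˢ Finset.Icc (-(m : ℤ)) m) ∪
        (Finset.Icc (-(m : ℤ)) m ×ˢ ({(m : ℤ), -(m : ℤ)} : Finset ℤ)) := by
      intro v hv
      have := hmG v hv
      simp only [Finset.mem_union, Finset.mem_product, Finset.mem_insert, Finset.mem_singleton,
        Finset.mem_Icc]
      rcases abs_cases v.1 with h | h <;> rcases abs_cases v.2 with h' | h' <;> omega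
    refine (Finset.card_le_card hsub).trans ((Finset.card_union_le _ _).trans ?_)
    rw [Finset.card_product, Finset.card_product, Int.card_Icc]
    have h2 : ({(m : ℤ), -(m : ℤ)} : Finset ℤ).card ≤ 2 := Finset.card_le_two
    have h3 : ((m : ℤ) + 1 - -(m : ℤ)).toNat = 2 * m + 1 := by omega
    rw [h3]
    nlinarith
  calc ∑ v ∈ G, (1 : ℝ) / ((max |v.1| |v.2| : ℤ) : ℝ) ^ 2
      = ∑ v ∈ G, (1 : ℝ) / (m : ℝ) ^ 2 := by
        apply Finset.sum_congr rfl
        intro v hv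
        rw [hmG v hv, Int.cast_natCast]
    _ = G.card * (1 / (m : ℝ) ^ 2) := by rw [Finset.sum_const, nsmul_eq_mul]
    _ ≤ (12 * m) * (1 / (m : ℝ) ^ 2) := by
        gcongr
        exact_mod_cast hcard
    _ = 12 * (1 / (m : ℝ)) := by field_simp

/-- The one-dimensional energy estimate: `Σ_{z ∈ Z_H} f(z)² ≪ H² log p` for
`1 ≤ H ≤ √p`. -/
theorem stmt_16 :
    ∃ C : ℝ, 0 < C ∧
      ∀ (p : ℕ), p.Prime → 3 ≤ p →
      ∀ (H : ℕ), 1 ≤ H → (H : ℝ) ≤ Real.sqrt p →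
        (∑ z ∈ (Finset.image (fun t : ℕ => (t : ZMod p)) (Finset.range p)).filter
            (fun z : ZMod p => ∃ x y : ℤ, 1 ≤ |x| ∧ |x| ≤ (H : ℤ) ∧
              1 ≤ |y| ∧ |y| ≤ (H : ℤ) ∧ (y : ZMod p) * z = (x : ZMod p)),
          ((((Finset.Icc (-(H : ℤ)) (H : ℤ) ×ˢ Finset.Icc (-(H : ℤ)) (H : ℤ)).filter
              (fun q => (q.1 : ZMod p) * z = (q.2 : ZMod p))).card : ℝ)) ^ 2) ≤
          C * (H : ℝ) ^ 2 * Real.log p := by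
  refine ⟨144 * 24, by norm_num, ?_⟩
  intro p hp hp3 H hH hHs
  have : Fact p.Prime := ⟨hp⟩
  have hHp : H * H < p := by
    have h1 : (H : ℝ) ^ 2 ≤ p := (Real.le_sqrt (by positivity) (by positivity)).mp hHs
    have h2 : H * H ≤ p := by rw [← pow_two]; exact_mod_cast h1
    refine lt_of_le_of_ne h2 ?_
    intro h
    have hH1 : H ≠ 1 := by rintro rfl; omega
    rw [← h] at hp
    exact Nat.not_prime_mul hH1 hH1 hp
  have key := aux_short p H hp hHp
  choose! v hvb hv0 hvz hvc using key
  set S := (Finset.image (fun t : ℕ => (t : ZMod p)) (Finset.range p)).filter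
            (fun z : ZMod p => ∃ x y : ℤ, 1 ≤ |x| ∧ |x| ≤ (H : ℤ) ∧
              1 ≤ |y| ∧ |y| ≤ (H : ℤ) ∧ (y : ZMod p) * z = (x : ZMod p)) with hS
  have hSm : ∀ z ∈ S, ∃ x y : ℤ, 1 ≤ |x| ∧ |x| ≤ (H : ℤ) ∧
              1 ≤ |y| ∧ |y| ≤ (H : ℤ) ∧ (y : ZMod p) * z = (x : ZMod p) :=
    fun z hz => (Finset.mem_filter.mp hz).2
  have hsmall : ∀ x : ℤ, |x| ≤ H → (x : ZMod p) = 0 → x = 0 := by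
    intro x hx h
    rw [ZMod.intCast_zmod_eq_zero_iff_dvd] at h
    refine Int.eq_zero_of_abs_lt_dvd h (lt_of_le_of_lt hx ?_)
    have : H < p := by nlinarith
    exact_mod_cast this
  have hv1 : ∀ z ∈ S, ((v z).1 : ZMod p) ≠ 0 := by
    intro z hz h
    have hb := hvb z (hSm z hz)
    simp only [Finset.mem_product, Finset.mem_Icc, ← abs_le] at hb
    have h2 := hvz z (hSm z hz)
    rw [h, zero_mul] at h2
    exact hv0 z (hSm z hz) (Prod.ext (hsmall _ hb.1 h) (hsmall _ hb.2 h2.symm))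
  have hinj : Set.InjOn v S := by
    intro z hz w hw h
    have e1 := hvz z (hSm z hz)
    have e2 := hvz w (hSm w hw)
    rw [← h, ← e1] at e2
    exact (mul_left_cancel₀ (hv1 z hz) e2).symm
  have hlog1 : 1 ≤ Real.log p := by
    rw [Real.le_log_iff_exp_le (by positivity)]
    have : (3 : ℝ) ≤ p := by exact_mod_cast hp3
    linarith [Real.exp_one_lt_d9]
  have hlogH : Real.log H ≤ Real.log p := by
    apply Real.log_le_log (by exact_mod_cast hH)
    have : H ≤ p := by nlinarith
    exact_mod_cast this
  calc _ ≤ ∑ z ∈ S, 144 * (H : ℝ) ^ 2 * (1 / ((max |(v z).1| |(v z).2| : ℤ) : ℝ) ^ 2) := by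
        apply Finset.sum_le_sum
        intro z hz
        have hc := hvc z (hSm z hz)
        have hpos : 0 < max |(v z).1| |(v z).2| := by
          refine lt_max_of_lt_left (abs_pos.mpr ?_)
          intro h
          apply hv1 z hz
          rw [h]; simp
        generalize max |(v z).1| |(v z).2| = M at hc hpos
        have hM : (0 : ℝ) < M := by exact_mod_cast hpos
        rw [mul_one_div, le_div_iff₀ (by positivity), ← mul_pow]
        have hc' := (Int.cast_le (R := ℝ)).mpr hc
        push_cast at hc'
        calc _ ≤ (12 * (H : ℝ)) ^ 2 := by gcongr
          _ = _ := by ring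
    _ = 144 * (H : ℝ) ^ 2 * ∑ z ∈ S, (1 / ((max |(v z).1| |(v z).2| : ℤ) : ℝ) ^ 2) := by
        rw [Finset.mul_sum]
    _ = 144 * (H : ℝ) ^ 2 * ∑ w ∈ S.image v, (1 / ((max |w.1| |w.2| : ℤ) : ℝ) ^ 2) := by
        rw [Finset.sum_image hinj]
    _ ≤ 144 * (H : ℝ) ^ 2 * (12 * (1 + Real.log H)) := by
        gcongr
        refine le_trans (Finset.sum_le_sum_of_subset_of_nonneg ?_ ?_) (aux_sum_s16 H)
        · intro w hw
          rw [Finset.mem_image] at hw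
          obtain ⟨z, hz, rfl⟩ := hw
          rw [Finset.mem_filter]
          exact ⟨hvb z (hSm z hz), hv0 z (hSm z hz)⟩
        · intros; positivity
    _ ≤ 144 * (H : ℝ) ^ 2 * (24 * Real.log p) := by
        apply mul_le_mul_of_nonneg_left _ (by positivity)
        linarith
    _ = _ := by ring
end
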